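/- arXiv:2202.10219 — 6 statements merged into one kernel-verified Lean document; each statement's English description precedes it below -/
import Mathlib

section
/- Let C_{GN,2d} := inf{ ‖u‖_{L²(ℝ²)}² ‖∇u‖_{L²(ℝ²)}² / ‖u‖_{L⁴(ℝ²)}⁴ : u ∈ H¹(ℝ²), u ≠ 0 }. Then for every family (u_j)_{j∈ℤ} of functions in H¹(ℝ²) with Σ_{j∈ℤ} (‖u_j‖_{L²}² + ‖∇u_j‖_{L²}²) < ∞, one has I(u) := ∫_{ℝ²} (Σ_{i∈ℤ} |u_i(x)|²)² dx + Σ_{j∈ℤ} ∫_{ℝ²} (Σ_{i≠j} |u_i(x)|²) |u_j(x)|² dx ≤ 2 · C_{GN,2d}^{-1} · (Σ_{j∈ℤ} ‖u_j‖_{L²}²) · (Σ_{j∈ℤ} ‖∇u_j‖_{L²}²). -/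
open MeasureTheory
open scoped ENNReal

noncomputable section

/-- The underlying Euclidean space `ℝ²`. -/
abbrev R2 : Type := EuclideanSpace ℝ (Fin 2)

/-- The pointwise norm of the gradient of `u : ℝ² → ℂ`. -/
def gradNorm (u : R2 → ℂ) (x : R2) : ℝ := ‖fderiv ℝ u x‖

/-- `u ∈ H¹(ℝ²)`: `u` is differentiable, `u ∈ L²(ℝ²)` and `∇u ∈ L²(ℝ²)`. -/
def IsH1 (u : R2 → ℂ) : Prop :=
  Differentiable ℝ u ∧ MemLp u 2 volume ∧ MemLp (gradNorm u) 2 volume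

/-- The sharp 2D Gagliardo–Nirenberg (Weinstein) constant
`C_{GN,2d} = inf ‖u‖₂²‖∇u‖₂² / ‖u‖₄⁴` over nonzero `u ∈ H¹(ℝ²)`. -/
def CGN2d : ℝ≥0∞ :=
  ⨅ u ∈ {u : R2 → ℂ | IsH1 u ∧ ¬ u =ᵐ[volume] (0 : R2 → ℂ)},
    eLpNorm u 2 volume ^ (2 : ℕ) * eLpNorm (gradNorm u) 2 volume ^ (2 : ℕ) /
      eLpNorm u 4 volume ^ (4 : ℕ)

/-- The interaction nonlinearity of the large scale resonant system:
`I(u) = ∫ (Σᵢ |uᵢ|²)² dx + Σⱼ ∫ (Σ_{i≠j} |uᵢ|²)|uⱼ|² dx`. -/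
def Ifun (u : ℤ → R2 → ℂ) : ℝ≥0∞ :=
  (∫⁻ x, (∑' i : ℤ, (‖u i x‖₊ : ℝ≥0∞) ^ (2 : ℕ)) ^ (2 : ℕ) ∂volume) +
    ∑' j : ℤ, ∫⁻ x,
      (∑' i : ℤ, if i = j then 0 else (‖u i x‖₊ : ℝ≥0∞) ^ (2 : ℕ)) *
        (‖u j x‖₊ : ℝ≥0∞) ^ (2 : ℕ) ∂volume

theorem aux_const (u : R2 → ℂ) (hd : Differentiable ℝ u)
    (h0 : ∀ᵐ x ∂(volume : Measure R2), fderiv ℝ u x = 0) (v x : R2) : u (x + v) = u x := by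
  have hm : MeasurableSet {x : R2 | fderiv ℝ u x = 0} :=
    (measurable_fderiv ℝ u) (measurableSet_singleton 0)
  have h1 : ∀ᵐ t ∂(volume : Measure ℝ), ∀ᵐ x ∂(volume : Measure R2),
      fderiv ℝ u (x + t • v) = 0 := by
    refine Filter.Eventually.of_forall fun t => ?_
    exact (measurePreserving_add_right (volume : Measure R2) (t • v)).quasiMeasurePreserving.ae h0
  have hm2 : MeasurableSet {p : ℝ × R2 | fderiv ℝ u (p.2 + p.1 • v) = 0} := by
    have : Measurable (fun p : ℝ × R2 => p.2 + p.1 • v) := by fun_prop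
    exact this hm
  have h2 : ∀ᵐ x ∂(volume : Measure R2), ∀ᵐ t ∂(volume : Measure ℝ),
      fderiv ℝ u (x + t • v) = 0 := (Measure.ae_ae_comm hm2).1 h1
  have h3 : (fun x => u (x + v)) =ᵐ[volume] u := by
    filter_upwards [h2] with x hx
    have hder : ∀ t : ℝ, HasDerivAt (fun t : ℝ => u (x + t • v)) (fderiv ℝ u (x + t • v) v) t := by
      intro t
      have hl : HasDerivAt (fun t : ℝ => x + t • v) v t := by
        simpa using ((hasDerivAt_id t).smul_const v).const_add x
      exact (hd (x + t • v)).hasFDerivAt.comp_hasDerivAt t hl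
    have hz : (fun t : ℝ => fderiv ℝ u (x + t • v) v) =ᵐ[volume] (fun _ => (0 : ℂ)) := by
      filter_upwards [hx] with t ht
      simp [ht]
    have hint : IntervalIntegrable (fun t : ℝ => fderiv ℝ u (x + t • v) v) volume 0 1 := by
      have : IntervalIntegrable (fun _ : ℝ => (0 : ℂ)) volume 0 1 := by simp
      exact this.congr_ae (ae_restrict_of_ae hz.symm)
    have hf := intervalIntegral.integral_eq_sub_of_hasDerivAt (fun t _ => hder t) hint
    rw [intervalIntegral.integral_congr_ae (g := fun _ => (0 : ℂ))
      (hz.mono fun t ht _ => ht)] at hf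
    simp at hf
    exact sub_eq_zero.1 hf.symm
  have hc : Continuous u := hd.continuous
  have := (Continuous.ae_eq_iff_eq volume (by fun_prop) hc).1 h3
  exact congrFun this x

theorem aux_zero (u : R2 → ℂ) (hu : IsH1 u)
    (h0 : eLpNorm (gradNorm u) 2 volume = 0) : u =ᵐ[volume] (0 : R2 → ℂ) := by
  have h1 := (eLpNorm_eq_zero_iff hu.2.2.1 (by norm_num)).1 h0
  have h2 : ∀ᵐ x ∂(volume : Measure R2), fderiv ℝ u x = 0 := by
    filter_upwards [h1] with x hx
    simpa [gradNorm] using hx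
  have h3 : u = fun _ => u 0 := by
    funext x
    simpa using aux_const u hu.1 h2 x 0
  have h4 := hu.2.1
  rw [h3, memLp_const_iff (by norm_num) (by norm_num)] at h4
  rcases h4 with h4 | h4
  · rw [h3, h4]; rfl
  · simp at h4

theorem aux_gn (u : R2 → ℂ) (hu : IsH1 u) :
    eLpNorm u 4 volume ^ (4 : ℕ) ≤ CGN2d⁻¹ *
      (eLpNorm u 2 volume ^ (2 : ℕ) * eLpNorm (gradNorm u) 2 volume ^ (2 : ℕ)) := by
  by_cases hz : u =ᵐ[volume] (0 : R2 → ℂ)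
  · rw [eLpNorm_congr_ae hz]; simp
  have hC : CGN2d ≤ eLpNorm u 2 volume ^ (2 : ℕ) * eLpNorm (gradNorm u) 2 volume ^ (2 : ℕ) /
      eLpNorm u 4 volume ^ (4 : ℕ) := iInf₂_le u ⟨hu, hz⟩
  set a := eLpNorm u 2 volume ^ (2 : ℕ) * eLpNorm (gradNorm u) 2 volume ^ (2 : ℕ) with ha
  have ha0 : a ≠ 0 := by
    refine mul_ne_zero (pow_ne_zero _ fun h => hz ?_) (pow_ne_zero _ fun h => hz (aux_zero u hu h))
    exact (eLpNorm_eq_zero_iff hu.2.1.1 (by norm_num)).1 h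
  have hat : a ≠ ⊤ :=
    ENNReal.mul_ne_top (ENNReal.pow_ne_top hu.2.1.2.ne) (ENNReal.pow_ne_top hu.2.2.2.ne)
  have h := ENNReal.inv_le_inv.2 hC
  rw [ENNReal.inv_div (Or.inr hat) (Or.inr ha0)] at h
  exact (ENNReal.div_le_iff ha0 hat).1 h

theorem aux_cs (a b : ℤ → ℝ≥0∞) :
    ∑' i, (a i) ^ (1/2 : ℝ) * (b i) ^ (1/2 : ℝ) ≤
      (∑' i, a i) ^ (1/2 : ℝ) * (∑' i, b i) ^ (1/2 : ℝ) := by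
  have h := ENNReal.lintegral_mul_le_Lp_mul_Lq (Measure.count : Measure ℤ)
    Real.HolderConjugate.two_two (f := fun i => a i ^ (1/2 : ℝ)) (g := fun i => b i ^ (1/2 : ℝ))
    (by fun_prop) (by fun_prop)
  simp only [lintegral_count, Pi.mul_apply, ← ENNReal.rpow_mul] at h
  norm_num at h ⊢
  exact h

theorem aux_rho (f : ℤ → R2 → ℝ≥0∞) (hf : ∀ i, Measurable (f i)) :
    ∫⁻ x, (∑' i, f i x) ^ (2 : ℕ) ≤ (∑' i, (∫⁻ x, (f i x) ^ (2 : ℕ)) ^ (1/2 : ℝ)) ^ (2 : ℕ) := by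
  have e : ∀ x, (∑' i, f i x) ^ (2 : ℕ) = ∑' i, ∑' j, f i x * f j x := by
    intro x
    rw [sq, ← ENNReal.tsum_mul_right]
    simp_rw [ENNReal.tsum_mul_left]
  simp_rw [e]
  rw [lintegral_tsum (by fun_prop), sq, ← ENNReal.tsum_mul_right]
  refine ENNReal.tsum_le_tsum fun i => ?_
  rw [lintegral_tsum (by fun_prop), ← ENNReal.tsum_mul_left]
  refine ENNReal.tsum_le_tsum fun j => ?_
  have h := ENNReal.lintegral_mul_le_Lp_mul_Lq (volume : Measure R2)
    Real.HolderConjugate.two_two (hf i).aemeasurable (hf j).aemeasurable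
  simpa using h

theorem aux_four (u : R2 → ℂ) :
    ∫⁻ x, ((‖u x‖₊ : ℝ≥0∞) ^ (2 : ℕ)) ^ (2 : ℕ) = eLpNorm u 4 volume ^ (4 : ℕ) := by
  have h := eLpNorm_nnreal_pow_eq_lintegral (μ := (volume : Measure R2)) (f := u) (p := 4)
    (by norm_num)
  norm_num at h
  rw [h]
  simp only [← pow_mul]
  rfl

/-- Lower-bound half of Proposition 1.1: for every family `(u_j)_{j∈ℤ} ⊂ H¹(ℝ²)` with
`Σ_j (‖u_j‖₂² + ‖∇u_j‖₂²) < ∞`, one has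
`I(u) ≤ 2 C_{GN,2d}⁻¹ (Σ_j ‖u_j‖₂²) (Σ_j ‖∇u_j‖₂²)`. -/
theorem resonant_interaction_bound (u : ℤ → R2 → ℂ) (hu : ∀ j, IsH1 (u j))
    (hfin : (∑' j : ℤ, (eLpNorm (u j) 2 volume ^ (2 : ℕ) +
        eLpNorm (gradNorm (u j)) 2 volume ^ (2 : ℕ))) < ⊤) :
    Ifun u ≤ 2 * CGN2d⁻¹ * (∑' j : ℤ, eLpNorm (u j) 2 volume ^ (2 : ℕ)) *
      (∑' j : ℤ, eLpNorm (gradNorm (u j)) 2 volume ^ (2 : ℕ)) := by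
  have hmeas : ∀ i, Measurable fun x => (‖u i x‖₊ : ℝ≥0∞) ^ (2 : ℕ) := fun i => by
    have := (hu i).1.continuous.measurable
    fun_prop
  set R := ∫⁻ x, (∑' i : ℤ, (‖u i x‖₊ : ℝ≥0∞) ^ (2 : ℕ)) ^ (2 : ℕ) with hR
  have hI : Ifun u ≤ 2 * R := by
    rw [two_mul]
    refine add_le_add le_rfl ?_
    calc _ ≤ ∑' j : ℤ, ∫⁻ x, (∑' i : ℤ, (‖u i x‖₊ : ℝ≥0∞) ^ (2 : ℕ)) *
          (‖u j x‖₊ : ℝ≥0∞) ^ (2 : ℕ) := by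
          refine ENNReal.tsum_le_tsum fun j => lintegral_mono fun x => ?_
          refine mul_le_mul_left ?_ _
          refine ENNReal.tsum_le_tsum fun i => ?_
          split_ifs <;> simp
      _ = R := by
          have hm : ∀ j : ℤ, AEMeasurable (fun x => (∑' i : ℤ, (‖u i x‖₊ : ℝ≥0∞) ^ (2 : ℕ)) *
              (‖u j x‖₊ : ℝ≥0∞) ^ (2 : ℕ)) (volume : Measure R2) := fun j =>
            ((Measurable.tsum hmeas).mul (hmeas j)).aemeasurable
          rw [← lintegral_tsum hm]
          simp_rw [ENNReal.tsum_mul_left, ← sq]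
          rfl
  have hRb : R ≤ CGN2d⁻¹ * ((∑' j : ℤ, eLpNorm (u j) 2 volume ^ (2 : ℕ)) *
      (∑' j : ℤ, eLpNorm (gradNorm (u j)) 2 volume ^ (2 : ℕ))) := by
    have hsq : ∀ y : ℝ≥0∞, (y ^ (1/2 : ℝ)) ^ (2 : ℕ) = y := fun y => by
      rw [← ENNReal.rpow_natCast, ← ENNReal.rpow_mul]; norm_num
    refine (aux_rho _ hmeas).trans ?_
    calc _ ≤ (∑' i, (CGN2d⁻¹) ^ (1/2 : ℝ) * ((eLpNorm (u i) 2 volume ^ (2 : ℕ)) ^ (1/2 : ℝ) *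
          (eLpNorm (gradNorm (u i)) 2 volume ^ (2 : ℕ)) ^ (1/2 : ℝ))) ^ (2 : ℕ) := by
          refine pow_le_pow_left' (ENNReal.tsum_le_tsum fun i => ?_) 2
          rw [← ENNReal.mul_rpow_of_nonneg _ _ (by norm_num),
            ← ENNReal.mul_rpow_of_nonneg _ _ (by norm_num), aux_four]
          exact ENNReal.rpow_le_rpow (aux_gn _ (hu i)) (by norm_num)
      _ ≤ ((CGN2d⁻¹) ^ (1/2 : ℝ) * ((∑' j : ℤ, eLpNorm (u j) 2 volume ^ (2 : ℕ)) ^ (1/2 : ℝ) *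
          (∑' j : ℤ, eLpNorm (gradNorm (u j)) 2 volume ^ (2 : ℕ)) ^ (1/2 : ℝ))) ^ (2 : ℕ) := by
          rw [ENNReal.tsum_mul_left]
          exact pow_le_pow_left' (mul_le_mul_right (aux_cs _ _) _) 2
      _ = _ := by simp only [mul_pow, hsq]
  calc Ifun u ≤ 2 * R := hI
    _ ≤ 2 * _ := mul_le_mul_right hRb 2
    _ = _ := by ring

end
end

section
/- Define C_{GN,2d} := inf{ ‖u‖_{L²(ℝ²)}² ‖∇u‖_{L²(ℝ²)}² / ‖u‖_{L⁴(ℝ²)}⁴ : u ∈ H¹(ℝ²), u ≠ 0 } and C_{GN,rs} := inf{ (Σ_{j∈ℤ} ‖u_j‖_{L²}²)(Σ_{j∈ℤ} ‖∇u_j‖_{L²}²) / I(u) : (u_j)_{j∈ℤ} a family in H¹(ℝ²) with Σ_{j∈ℤ}(‖u_j‖_{L²}² + ‖∇u_j‖_{L²}²) < ∞ and I(u) ≠ 0 }, where I(u) := ∫_{ℝ²} (Σ_{i∈ℤ} |u_i|²)² dx + Σ_{j∈ℤ} ∫_{ℝ²} (Σ_{i≠j} |u_i|²) |u_j|² dx.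 Then C_{GN,rs} = ½ · C_{GN,2d}. -/
open MeasureTheory
open scoped ENNReal

noncomputable section

/-- The Weinstein constant of the large scale resonant system:
`C_{GN,rs} = inf (Σ_j ‖u_j‖₂²)(Σ_j ‖∇u_j‖₂²) / I(u)` over all families `(u_j)_{j∈ℤ} ⊂ H¹(ℝ²)`
with `Σ_j (‖u_j‖₂² + ‖∇u_j‖₂²) < ∞` and `I(u) ≠ 0`. -/
def CGNrs : ℝ≥0∞ :=
  ⨅ u ∈ {u : ℤ → R2 → ℂ | (∀ j, IsH1 (u j)) ∧
      (∑' j : ℤ, (eLpNorm (u j) 2 volume ^ (2 : ℕ) +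
        eLpNorm (gradNorm (u j)) 2 volume ^ (2 : ℕ))) < ⊤ ∧ Ifun u ≠ 0},
    (∑' j : ℤ, eLpNorm (u j) 2 volume ^ (2 : ℕ)) *
      (∑' j : ℤ, eLpNorm (gradNorm (u j)) 2 volume ^ (2 : ℕ)) / Ifun u

lemma cs_lint {α : Type*} [MeasurableSpace α] (μ : Measure α) (f g : α → ℝ≥0∞)
    (hf : AEMeasurable f μ) (hg : AEMeasurable g μ) :
    (∫⁻ x, f x * g x ∂μ) ^ 2 ≤ (∫⁻ x, f x ^ 2 ∂μ) * (∫⁻ x, g x ^ 2 ∂μ) := by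
  have h := ENNReal.lintegral_mul_le_Lp_mul_Lq μ Real.HolderConjugate.two_two hf hg
  have h2 := pow_le_pow_left' h 2
  refine h2.trans ?_
  rw [mul_pow, ← ENNReal.rpow_natCast, ← ENNReal.rpow_natCast, ← ENNReal.rpow_mul,
    ← ENNReal.rpow_mul]
  simp

lemma cs_tsum (f g : ℤ → ℝ≥0∞) :
    (∑' i, f i * g i) ^ 2 ≤ (∑' i, f i ^ 2) * (∑' i, g i ^ 2) := by
  have h := cs_lint (Measure.count : Measure ℤ) f g (by fun_prop) (by fun_prop)
  simpa [lintegral_count] using h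

lemma four_norm (u : R2 → ℂ) :
    eLpNorm u 4 volume ^ (4 : ℕ) = ∫⁻ x, ((‖u x‖₊ : ℝ≥0∞) ^ 2) ^ 2 := by
  have h := eLpNorm_nnreal_pow_eq_lintegral (f := u) (μ := (volume : Measure R2)) (p := 4)
    (by norm_num)
  have h4 : ((4 : NNReal) : ℝ) = ((4 : ℕ) : ℝ) := by norm_num
  rw [h4] at h
  simp only [ENNReal.rpow_natCast] at h
  have e : ((4 : NNReal) : ℝ≥0∞) = 4 := by norm_num
  rw [e] at h
  rw [h]
  refine lintegral_congr fun x => ?_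
  rw [← pow_mul]
  rfl

lemma single_bound (u : R2 → ℂ) (hu : IsH1 u) :
    CGN2d * (∫⁻ x, ((‖u x‖₊ : ℝ≥0∞) ^ 2) ^ 2) ≤
      eLpNorm u 2 volume ^ (2 : ℕ) * eLpNorm (gradNorm u) 2 volume ^ (2 : ℕ) := by
  rw [← four_norm]
  by_cases h0 : u =ᵐ[volume] (0 : R2 → ℂ)
  · rw [eLpNorm_congr_ae h0]
    simp
  · apply ENNReal.mul_le_of_le_div
    exact iInf₂_le u ⟨hu, h0⟩

lemma meas_sq (u : R2 → ℂ) (hu : IsH1 u) : Measurable fun x => (‖u x‖₊ : ℝ≥0∞) ^ 2 := by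
  have := hu.1.continuous.measurable
  fun_prop

lemma pair_bound (u v : R2 → ℂ) (hu : IsH1 u) (hv : IsH1 v) :
    CGN2d * (∫⁻ x, (‖u x‖₊ : ℝ≥0∞) ^ 2 * (‖v x‖₊ : ℝ≥0∞) ^ 2) ≤
      (eLpNorm u 2 volume * eLpNorm (gradNorm u) 2 volume) *
      (eLpNorm v 2 volume * eLpNorm (gradNorm v) 2 volume) := by
  have h := cs_lint volume _ _ (meas_sq u hu).aemeasurable (meas_sq v hv).aemeasurable
  rw [← ENNReal.pow_le_pow_left_iff (two_ne_zero)]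
  rw [mul_pow]
  calc _ ≤ CGN2d ^ 2 * ((∫⁻ x, ((‖u x‖₊ : ℝ≥0∞) ^ 2) ^ 2) *
        (∫⁻ x, ((‖v x‖₊ : ℝ≥0∞) ^ 2) ^ 2)) := mul_le_mul' le_rfl h
    _ = (CGN2d * (∫⁻ x, ((‖u x‖₊ : ℝ≥0∞) ^ 2) ^ 2)) *
        (CGN2d * (∫⁻ x, ((‖v x‖₊ : ℝ≥0∞) ^ 2) ^ 2)) := by ring
    _ ≤ _ := mul_le_mul' (single_bound u hu) (single_bound v hv)
    _ = _ := by ring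

lemma rho_bound (u : ℤ → R2 → ℂ) (hu : ∀ j, IsH1 (u j)) :
    CGN2d * (∫⁻ x, (∑' i : ℤ, (‖u i x‖₊ : ℝ≥0∞) ^ (2 : ℕ)) ^ (2 : ℕ)) ≤
    (∑' j : ℤ, eLpNorm (u j) 2 volume ^ (2 : ℕ)) *
      (∑' j : ℤ, eLpNorm (gradNorm (u j)) 2 volume ^ (2 : ℕ)) := by
  refine le_trans ?_ (cs_tsum _ _)
  have e : (∫⁻ x, (∑' i : ℤ, (‖u i x‖₊ : ℝ≥0∞) ^ (2 : ℕ)) ^ (2 : ℕ)) =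
      ∑' i, ∑' j, ∫⁻ x, (‖u i x‖₊ : ℝ≥0∞) ^ 2 * (‖u j x‖₊ : ℝ≥0∞) ^ 2 := by
    have m := fun i => meas_sq (u i) (hu i)
    simp_rw [sq (∑' i : ℤ, (‖u i _‖₊ : ℝ≥0∞) ^ (2 : ℕ)), ← ENNReal.tsum_mul_right,
      ← ENNReal.tsum_mul_left]
    rw [lintegral_tsum]
    · congr 1; ext i
      rw [lintegral_tsum]
      exact fun j => ((m i).mul (m j)).aemeasurable
    · exact fun i => (Measurable.tsum fun j => (m i).mul (m j)).aemeasurable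
  rw [e, sq (∑' i : ℤ, _), ← ENNReal.tsum_mul_right]
  simp_rw [← ENNReal.tsum_mul_left]
  exact ENNReal.tsum_le_tsum fun i => ENNReal.tsum_le_tsum fun j =>
    pair_bound _ _ (hu i) (hu j)

lemma Ifun_le (u : ℤ → R2 → ℂ) (hu : ∀ j, IsH1 (u j)) :
    Ifun u ≤ 2 * ∫⁻ x, (∑' i : ℤ, (‖u i x‖₊ : ℝ≥0∞) ^ (2 : ℕ)) ^ (2 : ℕ) := by
  have m := fun i => meas_sq (u i) (hu i)
  rw [two_mul]
  unfold Ifun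
  gcongr
  rw [← lintegral_tsum]
  · refine lintegral_mono fun x => ?_
    simp only
    rw [sq (∑' i : ℤ, _), ← ENNReal.tsum_mul_left]
    refine ENNReal.tsum_le_tsum fun j => ?_
    gcongr with i
    split_ifs <;> simp
  · intro j
    refine (Measurable.mul (Measurable.tsum fun i => ?_) (m j)).aemeasurable
    split_ifs
    · exact measurable_const
    · exact m i

lemma lower : CGN2d / 2 ≤ CGNrs := by
  refine le_iInf₂ fun u hu => ?_
  obtain ⟨h1, h2, h3⟩ := hu
  have hA : (∑' j : ℤ, eLpNorm (u j) 2 volume ^ (2 : ℕ)) ≠ ⊤ :=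
    ((ENNReal.tsum_le_tsum fun j => le_self_add).trans_lt h2).ne
  have hB : (∑' j : ℤ, eLpNorm (gradNorm (u j)) 2 volume ^ (2 : ℕ)) ≠ ⊤ :=
    ((ENNReal.tsum_le_tsum fun j => le_add_self).trans_lt h2).ne
  rw [ENNReal.le_div_iff_mul_le (Or.inl h3) (Or.inr (ENNReal.mul_ne_top hA hB))]
  refine le_trans ?_ (rho_bound u h1)
  refine (mul_le_mul' le_rfl (Ifun_le u h1)).trans ?_
  rw [← mul_assoc, ENNReal.div_mul_cancel (by norm_num) (by norm_num)]

lemma isH1_zero : IsH1 (0 : R2 → ℂ) := by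
  refine ⟨differentiable_const 0, MemLp.zero, ?_⟩
  have : gradNorm (0 : R2 → ℂ) = 0 := by
    ext x; simp [gradNorm]
  rw [this]; exact MemLp.zero

def fam (N : ℕ) (u : R2 → ℂ) (j : ℤ) : R2 → ℂ := if j ∈ Finset.Ico (0:ℤ) (N+1) then u else 0

lemma tsum_fam (N : ℕ) (F : (R2 → ℂ) → ℝ≥0∞) (h0 : F 0 = 0) (u : R2 → ℂ) :
    ∑' j, F (fam N u j) = (N + 1) * F u := by
  rw [tsum_eq_sum (s := Finset.Ico (0:ℤ) (N+1))]
  · rw [Finset.sum_congr rfl (g := fun _ => F u)]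
    · rw [Finset.sum_const, Int.card_Ico, nsmul_eq_mul]
      congr 1
      have : ((N:ℤ) + 1 - 0).toNat = N + 1 := by omega
      rw [this]; push_cast; rfl
    · intro j hj
      simp only [fam, if_pos hj]
  · intro j hj
    simp only [fam, if_neg hj, h0]

lemma tsum_fam_ne (N : ℕ) (F : (R2 → ℂ) → ℝ≥0∞) (h0 : F 0 = 0) (u : R2 → ℂ) (k : ℤ)
    (hk : k ∈ Finset.Ico (0:ℤ) (N+1)) :
    ∑' j, (if j = k then 0 else F (fam N u j)) = N * F u := by
  rw [tsum_eq_sum (s := (Finset.Ico (0:ℤ) (N+1)).erase k)]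
  · rw [Finset.sum_congr rfl (g := fun _ => F u)]
    · rw [Finset.sum_const, Finset.card_erase_of_mem hk, Int.card_Ico, nsmul_eq_mul]
      congr 1
    · intro j hj
      rw [Finset.mem_erase] at hj
      simp only [fam, if_pos hj.2, if_neg hj.1]
  · intro j hj
    split_ifs with h
    · rfl
    · have : j ∉ Finset.Ico (0:ℤ) (N+1) := fun h' => hj (Finset.mem_erase.2 ⟨h, h'⟩)
      simp only [fam, if_neg this, h0]

lemma Ifun_fam (N : ℕ) (u : R2 → ℂ) (hu : IsH1 u) :
    Ifun (fam N u) = (N + 1) * ((2 * N + 1) * ∫⁻ x, ((‖u x‖₊ : ℝ≥0∞) ^ 2) ^ 2) := by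
  have m := meas_sq u hu
  have a1 : (∫⁻ x, (∑' i : ℤ, (‖fam N u i x‖₊ : ℝ≥0∞) ^ (2 : ℕ)) ^ (2 : ℕ)) =
      (N + 1) ^ 2 * ∫⁻ x, ((‖u x‖₊ : ℝ≥0∞) ^ 2) ^ 2 := by
    rw [← lintegral_const_mul _ (m.pow_const 2)]
    refine lintegral_congr fun x => ?_
    rw [tsum_fam N (fun v => (‖v x‖₊ : ℝ≥0∞) ^ (2 : ℕ)) (by simp), mul_pow]
  have a2 : (∑' j : ℤ, ∫⁻ x,
      (∑' i : ℤ, if i = j then 0 else (‖fam N u i x‖₊ : ℝ≥0∞) ^ (2 : ℕ)) *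
        (‖fam N u j x‖₊ : ℝ≥0∞) ^ (2 : ℕ)) =
      ∑' j : ℤ, (fun v : R2 → ℂ => ∫⁻ x, (N * (‖u x‖₊ : ℝ≥0∞) ^ 2) * (‖v x‖₊ : ℝ≥0∞) ^ 2)
        (fam N u j) := by
    congr 1; ext j
    refine lintegral_congr fun x => ?_
    by_cases hj : j ∈ Finset.Ico (0:ℤ) (N+1)
    · rw [tsum_fam_ne N (fun v => (‖v x‖₊ : ℝ≥0∞) ^ (2 : ℕ)) (by simp) u j hj]
    · have : fam N u j = 0 := by simp only [fam, if_neg hj]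
      simp [this]
  have a3 : (∫⁻ x, (N * (‖u x‖₊ : ℝ≥0∞) ^ 2) * (‖u x‖₊ : ℝ≥0∞) ^ 2) =
      N * ∫⁻ x, ((‖u x‖₊ : ℝ≥0∞) ^ 2) ^ 2 := by
    rw [← lintegral_const_mul _ (m.pow_const 2)]
    refine lintegral_congr fun x => ?_
    ring
  unfold Ifun
  rw [a1, a2, tsum_fam N (fun v : R2 → ℂ => ∫⁻ x, (N * (‖u x‖₊ : ℝ≥0∞) ^ 2) * (‖v x‖₊ : ℝ≥0∞) ^ 2)
    (by simp), a3]
  ring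

lemma limit_arg (X Y : ℝ≥0∞) (hY : Y ≠ ⊤) (h : ∀ N : ℕ, (2 * N + 1) * X ≤ (N + 1) * Y) :
    2 * X ≤ Y := by
  have hX : X ≠ ⊤ := by
    have := h 0
    simp at this
    exact (this.trans_lt hY.lt_top).ne
  lift X to NNReal using hX
  lift Y to NNReal using hY
  have h' : ∀ N : ℕ, (2 * (N:ℝ) + 1) * X ≤ (N + 1) * Y := fun N => by exact_mod_cast h N
  have : 2 * (X:ℝ) ≤ Y := by
    by_contra! hc
    obtain ⟨n, hn⟩ := exists_nat_gt ((Y:ℝ) / (2 * X - Y))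
    rw [div_lt_iff₀ (by linarith)] at hn
    have := h' n
    have := X.2
    nlinarith [X.coe_nonneg]
  exact_mod_cast this

lemma upper : CGNrs ≤ CGN2d / 2 := by
  rw [ENNReal.le_div_iff_mul_le (by simp) (by simp)]
  refine le_iInf₂ fun u hu => ?_
  obtain ⟨h1, h2⟩ := hu
  have hA : eLpNorm u 2 volume ^ (2 : ℕ) ≠ ⊤ := ENNReal.pow_ne_top h1.2.1.2.ne
  have hB : eLpNorm (gradNorm u) 2 volume ^ (2 : ℕ) ≠ ⊤ := ENNReal.pow_ne_top h1.2.2.2.ne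
  have hg0 : gradNorm (0 : R2 → ℂ) = 0 := by
    ext x; simp [gradNorm]
  have hc : eLpNorm u 4 volume ^ (4 : ℕ) ≠ 0 := by
    apply pow_ne_zero
    rw [Ne, eLpNorm_eq_zero_iff h1.2.1.1 (by norm_num)]
    exact h2
  have hAB := ENNReal.mul_ne_top hA hB
  rw [ENNReal.le_div_iff_mul_le (Or.inl hc) (Or.inr hAB), mul_comm CGNrs 2, mul_assoc]
  refine limit_arg _ _ hAB fun N => ?_
  rw [four_norm] at hc ⊢
  have s1 := tsum_fam N (fun v => eLpNorm v 2 volume ^ (2 : ℕ)) (by simp) u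
  have s2 := tsum_fam N (fun v => eLpNorm (gradNorm v) 2 volume ^ (2 : ℕ)) (by simp [hg0]) u
  have hN : ((N : ℝ≥0∞) + 1) ≠ ⊤ := by finiteness
  have key : CGNrs ≤ (∑' j : ℤ, eLpNorm (fam N u j) 2 volume ^ (2 : ℕ)) *
      (∑' j : ℤ, eLpNorm (gradNorm (fam N u j)) 2 volume ^ (2 : ℕ)) / Ifun (fam N u) := by
    refine iInf₂_le (fam N u) ⟨fun j => ?_, ?_, ?_⟩
    · unfold fam
      split_ifs
      · exact h1
      · exact isH1_zero
    · rw [ENNReal.tsum_add]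
      beta_reduce at s1 s2
      rw [s1, s2]
      exact ENNReal.add_lt_top.2 ⟨(ENNReal.mul_ne_top hN hA).lt_top,
        (ENNReal.mul_ne_top hN hB).lt_top⟩
    · rw [Ifun_fam N u h1]
      exact mul_ne_zero (by simp) (mul_ne_zero (by simp) hc)
  have key2 := ENNReal.mul_le_of_le_div key
  beta_reduce at s1 s2
  rw [s1, s2, Ifun_fam N u h1] at key2
  rw [← ENNReal.mul_le_mul_iff_right (a := (N : ℝ≥0∞) + 1) (by simp) hN]
  convert key2 using 1 <;> ring

/-- Proposition 1.1 (large scale Gagliardo–Nirenberg inequality): `C_{GN,rs} = ½ C_{GN,2d}`. -/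
theorem large_scale_gagliardo_nirenberg : CGNrs = CGN2d / 2 := by
  exact le_antisymm upper lower

end
end

section
/- There exists a constant C > 0 such that for every continuously differentiable function u : 𝕋 → ℂ with ∫_𝕋 u(y) dy = 0, one has ‖u‖_{L⁴(𝕋)}⁴ ≤ C · ‖u‖_{L²(𝕋)}³ · ‖u'‖_{L²(𝕋)}. -/
open Real intervalIntegral

noncomputable section

lemma aux_real (f g : ℝ → ℝ) (hd : ∀ x, HasDerivAt f (g x) x) (hg : Continuous g)
    (h0 : (∫ y in (0 : ℝ)..(2 * π), f y) = 0) (h : ℝ → ℝ) (hh : Continuous h)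
    (hb : ∀ y, |f y| * |g y| ≤ h y) (x : ℝ) (hx : x ∈ Set.Icc 0 (2 * π)) :
    f x ^ 2 ≤ 2 * ∫ y in (0 : ℝ)..(2 * π), h y := by
  have hf : Continuous f := continuous_iff_continuousAt.2 fun x => (hd x).continuousAt
  have hpi : (0 : ℝ) < 2 * π := by positivity
  have hF : ∀ x, HasDerivAt (fun x => ∫ y in (0 : ℝ)..x, f y) (f x) x := fun x =>
    intervalIntegral.integral_hasDerivAt_right (hf.intervalIntegrable _ _)
      (hf.stronglyMeasurableAtFilter _ _) hf.continuousAt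
  obtain ⟨c, hc, hfc⟩ := exists_hasDerivAt_eq_zero hpi
    (f := fun x => ∫ y in (0 : ℝ)..x, f y) (f' := f)
    (fun x _ => (hF x).continuousAt.continuousWithinAt) (by simp [h0]) (fun x _ => hF x)
  have hh0 : ∀ y, 0 ≤ h y := fun y => le_trans (by positivity) (hb y)
  have e : ∫ y in c..x, 2 * (f y * g y) = f x ^ 2 - f c ^ 2 := by
    apply intervalIntegral.integral_eq_sub_of_hasDerivAt (f := fun y => f y ^ 2)
    · intro y _
      have h2 := (hd y).mul (hd y)
      have e1 : (fun y => f y ^ 2) = f * f := by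
        ext z; simp [sq]
      have e2 : 2 * (f y * g y) = g y * f y + f y * g y := by ring
      rw [e1, e2]
      exact h2
    · exact (by fun_prop : Continuous _).intervalIntegrable _ _
  rw [hfc, intervalIntegral.integral_const_mul] at e
  have e2 : |∫ y in c..x, f y * g y| ≤ |∫ y in c..x, h y| := by
    have := intervalIntegral.norm_integral_le_abs_of_norm_le (a := c) (b := x)
      (μ := MeasureTheory.volume)
      (f := fun y => f y * g y) (g := h)
      (Filter.Eventually.of_forall fun y => by simpa [abs_mul] using hb y)
      (hh.intervalIntegrable _ _)
    simpa using this
  have e3 : |∫ y in c..x, h y| ≤ |∫ y in (0:ℝ)..(2*π), h y| := by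
    apply intervalIntegral.abs_integral_mono_interval
    · rw [Set.uIoc_of_le hpi.le]
      exact Set.Ioc_subset_Ioc (le_min hc.1.le hx.1) (max_le hc.2.le hx.2)
    · exact Filter.Eventually.of_forall hh0
    · exact hh.intervalIntegrable _ _
  rw [abs_of_nonneg (intervalIntegral.integral_nonneg hpi.le fun y _ => hh0 y)] at e3
  have := le_abs_self (∫ y in c..x, f y * g y)
  linarith

lemma aux_cs_s6 (a b : ℝ → ℝ) (ha : Continuous a) (hb : Continuous b) :
    (∫ y in (0 : ℝ)..(2 * π), a y * b y) ^ 2 ≤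
      (∫ y in (0 : ℝ)..(2 * π), a y ^ 2) * (∫ y in (0 : ℝ)..(2 * π), b y ^ 2) := by
  have hpi : (0 : ℝ) < 2 * π := by positivity
  have := discrim_le_zero (a := ∫ y in (0 : ℝ)..(2 * π), a y ^ 2)
    (b := 2 * ∫ y in (0 : ℝ)..(2 * π), a y * b y) (c := ∫ y in (0 : ℝ)..(2 * π), b y ^ 2) (by
      intro t
      have h1 : 0 ≤ ∫ y in (0 : ℝ)..(2 * π), (t * a y + b y) ^ 2 :=
        intervalIntegral.integral_nonneg hpi.le fun y _ => sq_nonneg _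
      have h2 : (fun y => (t * a y + b y) ^ 2) =
          fun y => ((t * t) * a y ^ 2 + (2 * t) * (a y * b y)) + b y ^ 2 := by
        ext y; ring
      rw [h2, intervalIntegral.integral_add, intervalIntegral.integral_add,
        intervalIntegral.integral_const_mul, intervalIntegral.integral_const_mul] at h1
      · linarith
      all_goals exact (by fun_prop : Continuous _).intervalIntegrable _ _)
  unfold discrim at this
  nlinarith

/-- Gagliardo–Nirenberg-type inequality on the torus `𝕋 = ℝ/(2πℤ)` for mean-zero functions
(the existence of the constant `C_𝕋` of Proposition 1.4): there is a `C > 0` such that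
`‖u‖_{L⁴(𝕋)}⁴ ≤ C ‖u‖_{L²(𝕋)}³ ‖u'‖_{L²(𝕋)}` for all `C¹` functions `u : 𝕋 → ℂ` with
`∫_𝕋 u = 0`.  Functions on `𝕋` are realised as `2π`-periodic functions on `ℝ`, and
integrals over `𝕋` as integrals over `[0, 2π]`. -/
theorem torus_gagliardo_nirenberg :
    ∃ C : ℝ, 0 < C ∧ ∀ u : ℝ → ℂ, ContDiff ℝ 1 u → Function.Periodic u (2 * π) →
      (∫ y in (0 : ℝ)..(2 * π), u y) = 0 →
      (∫ y in (0 : ℝ)..(2 * π), ‖u y‖ ^ 4) ≤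
        C * (∫ y in (0 : ℝ)..(2 * π), ‖u y‖ ^ 2) ^ ((3 : ℝ) / 2) *
          (∫ y in (0 : ℝ)..(2 * π), ‖deriv u y‖ ^ 2) ^ ((1 : ℝ) / 2) := by
  refine ⟨4, by norm_num, fun u hu _ h0 => ?_⟩
  have hpi : (0 : ℝ) < 2 * π := by positivity
  have hd : ∀ x, HasDerivAt u (deriv u x) x := fun x =>
    (hu.differentiable one_ne_zero x).hasDerivAt
  have hc : Continuous u := hu.continuous
  have hc' : Continuous (deriv u) := hu.continuous_deriv le_rfl
  have hI := aux_cs_s6 (fun y => ‖u y‖) (fun y => ‖deriv u y‖) hc.norm hc'.norm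
  set A := ∫ y in (0 : ℝ)..(2 * π), ‖u y‖ ^ 2 with hA
  set B := ∫ y in (0 : ℝ)..(2 * π), ‖deriv u y‖ ^ 2 with hB
  set I := ∫ y in (0 : ℝ)..(2 * π), ‖u y‖ * ‖deriv u y‖ with hIdef
  have hA0 : 0 ≤ A := intervalIntegral.integral_nonneg hpi.le fun y _ => sq_nonneg _
  have hB0 : 0 ≤ B := intervalIntegral.integral_nonneg hpi.le fun y _ => sq_nonneg _
  have hre0 : (∫ y in (0 : ℝ)..(2 * π), (u y).re) = 0 := by
    have := Complex.reCLM.intervalIntegral_comp_comm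
      (hc.intervalIntegrable (μ := MeasureTheory.volume) 0 (2 * π))
    simpa [h0] using this
  have him0 : (∫ y in (0 : ℝ)..(2 * π), (u y).im) = 0 := by
    have := Complex.imCLM.intervalIntegral_comp_comm
      (hc.intervalIntegrable (μ := MeasureTheory.volume) 0 (2 * π))
    simpa [h0] using this
  have hsup : ∀ x ∈ Set.Icc 0 (2 * π), ‖u x‖ ^ 2 ≤ 4 * I := by
    intro x hx
    have h1 := aux_real (fun y => (u y).re) (fun y => (deriv u y).re)
      (fun y => Complex.reCLM.hasFDerivAt.comp_hasDerivAt y (hd y))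
      (Complex.continuous_re.comp hc') hre0 (fun y => ‖u y‖ * ‖deriv u y‖)
      (hc.norm.mul hc'.norm)
      (fun y => mul_le_mul (Complex.abs_re_le_norm _) (Complex.abs_re_le_norm _)
        (abs_nonneg _) (norm_nonneg _)) x hx
    have h2 := aux_real (fun y => (u y).im) (fun y => (deriv u y).im)
      (fun y => Complex.imCLM.hasFDerivAt.comp_hasDerivAt y (hd y))
      (Complex.continuous_im.comp hc') him0 (fun y => ‖u y‖ * ‖deriv u y‖)
      (hc.norm.mul hc'.norm)
      (fun y => mul_le_mul (Complex.abs_im_le_norm _) (Complex.abs_im_le_norm _)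
        (abs_nonneg _) (norm_nonneg _)) x hx
    have h3 : ‖u x‖ ^ 2 = (u x).re ^ 2 + (u x).im ^ 2 := by
      rw [Complex.sq_norm, Complex.normSq_apply]; ring
    rw [h3]
    linarith
  have hIs : I ≤ A ^ ((1 : ℝ) / 2) * B ^ ((1 : ℝ) / 2) := by
    rw [← Real.mul_rpow hA0 hB0, ← Real.sqrt_eq_rpow]
    exact Real.le_sqrt_of_sq_le hI
  have h4 : (∫ y in (0 : ℝ)..(2 * π), ‖u y‖ ^ 4) ≤ 4 * I * A := by
    rw [hA, ← intervalIntegral.integral_const_mul]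
    apply intervalIntegral.integral_mono_on hpi.le
    · exact (by fun_prop : Continuous _).intervalIntegrable _ _
    · exact (by fun_prop : Continuous _).intervalIntegrable _ _
    · intro x hx
      have := mul_le_mul_of_nonneg_right (hsup x hx) (sq_nonneg ‖u x‖)
      calc ‖u x‖ ^ 4 = ‖u x‖ ^ 2 * ‖u x‖ ^ 2 := by ring
        _ ≤ _ := this
  have h5 : A ^ ((3 : ℝ) / 2) = A * A ^ ((1 : ℝ) / 2) := by
    rw [show (3 : ℝ) / 2 = 1 + 1 / 2 by norm_num,
      Real.rpow_add_of_nonneg hA0 (by norm_num) (by norm_num), Real.rpow_one]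
  rw [h5]
  nlinarith [mul_le_mul_of_nonneg_right hIs hA0]

end
end

section
/- Let s ∈ (1/2, 1]. There exists a constant C > 0 such that for all continuously differentiable functions u₁, u₂ : 𝕋 → ℂ one has ‖u₁u₂‖_{Ḣˢ(𝕋)} ≤ C ( ‖u₁‖_{Ḣˢ(𝕋)} ‖u₂‖_{L^∞(𝕋)} + ‖u₂‖_{Ḣˢ(𝕋)} ‖u₁‖_{L^∞(𝕋)} ), where ‖u‖_{Ḣˢ(𝕋)}² := Σ_{k∈ℤ} |k|^{2s} |û(k)|² and û(k) := (2π)^{-1/2} ∫_𝕋 u(y) e^{-iky} dy. -/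
open Real intervalIntegral

noncomputable section

/-- The `k`-th Fourier coefficient `û(k) = (2π)^{-1/2} ∫_𝕋 u(y) e^{-iky} dy` of a
`2π`-periodic function `u : ℝ → ℂ`. -/
def fourierCoef (u : ℝ → ℂ) (k : ℤ) : ℂ :=
  (((2 * π) ^ (-(1 : ℝ) / 2) : ℝ) : ℂ) *
    ∫ y in (0 : ℝ)..(2 * π), u y * Complex.exp (-Complex.I * k * y)

/-- The square of the homogeneous Sobolev norm `‖u‖_{Ḣˢ(𝕋)}² = Σ_k |k|^{2s} |û(k)|²`. -/
def sobNormSq (s : ℝ) (u : ℝ → ℂ) : ℝ :=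
  ∑' k : ℤ, |(k : ℝ)| ^ (2 * s) * ‖fourierCoef u k‖ ^ 2

lemma hasSum_congr_aux {f g : ℤ → ℝ} {a : ℝ} (h : ∀ k, f k = g k) : HasSum f a ↔ HasSum g a := by
  rw [funext h]

open MeasureTheory Set Filter Topology in
lemma lemB (F : Finset ℤ) (a : ℤ → ℝ) (K : ℝ)
    (H : ∀ h : ℝ, 0 < h → ∑ k ∈ F, (2 - 2 * Real.cos (k * h)) * a k ≤ K * h ^ 2) :
    ∑ k ∈ F, (k : ℝ) ^ 2 * a k ≤ K := by
  have h1 : ∀ k : ℤ, Tendsto (fun h : ℝ => (2 - 2 * Real.cos (k * h)) / h ^ 2) (𝓝[>] 0)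
      (𝓝 ((k : ℝ) ^ 2)) := by
    intro k
    have hd : HasDerivAt (fun h : ℝ => 2 * Real.sin (k / 2 * h)) k 0 := by
      have h0 : HasDerivAt (fun h : ℝ => (k / 2 : ℝ) * h) (k / 2 : ℝ) 0 := by
        simpa using (hasDerivAt_id (0 : ℝ)).const_mul (k / 2 : ℝ)
      have := (h0.sin).const_mul 2
      have e : 2 * (Real.cos (k / 2 * 0) * (k / 2 : ℝ)) = k := by
        rw [mul_zero, Real.cos_zero]; ring
      rwa [e] at this
    have h2 := (hasDerivAt_iff_tendsto_slope_zero.1 hd).mono_left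
      (nhdsWithin_mono 0 (fun x (hx : 0 < x) => (ne_of_gt hx : x ≠ 0)) : 𝓝[>] (0 : ℝ) ≤ 𝓝[≠] 0)
    refine (h2.pow 2).congr fun h => ?_
    have h3 : Real.cos (k * h) = 2 * Real.cos (k / 2 * h) ^ 2 - 1 := by
      rw [← Real.cos_two_mul]; congr 1; ring
    have h4 := Real.sin_sq_add_cos_sq (k / 2 * h)
    simp only [zero_add, mul_zero, Real.sin_zero, sub_zero, smul_eq_mul]
    rw [h3, mul_pow, mul_pow, inv_pow, div_eq_mul_inv (2 - _), mul_comm]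
    congr 1
    linear_combination 4 * h4
  have h2 : Tendsto (fun h : ℝ => ∑ k ∈ F, (2 - 2 * Real.cos (k * h)) / h ^ 2 * a k) (𝓝[>] 0)
      (𝓝 (∑ k ∈ F, (k : ℝ) ^ 2 * a k)) :=
    tendsto_finsetSum _ fun k _ => (h1 k).mul_const _
  refine le_of_tendsto h2 ?_
  filter_upwards [self_mem_nhdsWithin] with h hh
  have hh' : 0 < h := hh
  have := H h hh
  calc _ = (∑ k ∈ F, (2 - 2 * Real.cos (k * h)) * a k) / h ^ 2 := by
        rw [Finset.sum_div]; exact Finset.sum_congr rfl fun k _ => by ring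
    _ ≤ K := by rw [div_le_iff₀ (by positivity)]; exact this

lemma phi_nonneg (t : ℝ) : 0 ≤ 2 - 2 * Real.cos t := by linarith [Real.cos_le_one t]

lemma phi_le (t : ℝ) : 2 - 2 * Real.cos t ≤ t ^ 2 := by
  linarith [Real.one_sub_sq_div_two_le_cos (x := t)]

open MeasureTheory Set Filter Topology in
lemma g_int (s : ℝ) (hs1 : 1 / 2 < s) (hs2 : s < 1) :
    IntegrableOn (fun h : ℝ => (2 - 2 * Real.cos h) * h ^ (-1 - 2 * s)) (Ioi 0) := by
  have hm : Measurable (fun h : ℝ => (2 - 2 * Real.cos h) * h ^ (-1 - 2 * s)) := by fun_prop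
  have hu : Ioi (0 : ℝ) = Ioo 0 1 ∪ Ici 1 := by
    ext x; simp only [mem_Ioi, mem_union, mem_Ioo, mem_Ici]
    constructor
    · intro h; rcases lt_or_ge x 1 with h' | h'
      · exact Or.inl ⟨h, h'⟩
      · exact Or.inr h'
    · rintro (h | h); exacts [h.1, by linarith]
  rw [hu, integrableOn_union]
  constructor
  · have h1 : IntegrableOn (fun h : ℝ => h ^ (1 - 2 * s)) (Ioo 0 1) :=
      (intervalIntegral.integrableOn_Ioo_rpow_iff zero_lt_one).2 (by linarith)
    refine Integrable.mono' h1 hm.aestronglyMeasurable ?_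
    filter_upwards [self_mem_ae_restrict measurableSet_Ioo] with h hh
    have hp : 0 < h := hh.1
    rw [Real.norm_of_nonneg (mul_nonneg (phi_nonneg _) (Real.rpow_nonneg hp.le _))]
    calc _ ≤ h ^ 2 * h ^ (-1 - 2 * s) :=
          mul_le_mul_of_nonneg_right (phi_le _) (Real.rpow_nonneg hp.le _)
      _ = _ := by
          rw [← Real.rpow_natCast h 2, ← Real.rpow_add hp]; congr 1; push_cast; ring
  · rw [integrableOn_Ici_iff_integrableOn_Ioi]
    have h1 : IntegrableOn (fun h : ℝ => 4 * h ^ (-1 - 2 * s)) (Ioi 1) :=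
      (integrableOn_Ioi_rpow_of_lt (by linarith) zero_lt_one).const_mul 4
    refine Integrable.mono' h1 hm.aestronglyMeasurable ?_
    filter_upwards [self_mem_ae_restrict measurableSet_Ioi] with h hh
    have hp : 0 < h := lt_trans zero_lt_one hh
    rw [Real.norm_of_nonneg (mul_nonneg (phi_nonneg _) (Real.rpow_nonneg hp.le _))]
    exact mul_le_mul_of_nonneg_right (by linarith [Real.neg_one_le_cos h]) (Real.rpow_nonneg hp.le _)

open MeasureTheory Set Filter Topology in
lemma weight (s : ℝ) (hs1 : 1 / 2 < s) (hs2 : s < 1) :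
    ∃ c : ℝ, 0 < c ∧ ∀ k : ℤ,
      ∫⁻ h in Ioi (0 : ℝ), ENNReal.ofReal ((2 - 2 * Real.cos (k * h)) * h ^ (-1 - 2 * s))
        = ENNReal.ofReal (c * |(k : ℝ)| ^ (2 * s)) := by
  have hg := g_int s hs1 hs2
  refine ⟨∫ h in Ioi (0 : ℝ), (2 - 2 * Real.cos h) * h ^ (-1 - 2 * s), ?_, fun k => ?_⟩
  · rw [setIntegral_pos_iff_support_of_nonneg_ae _ hg]
    · refine lt_of_lt_of_le ?_ (measure_mono (s := Ioo (1 : ℝ) 2) ?_)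
      · simp
      · intro x hx
        have hx0 : 0 < x := by linarith [hx.1]
        refine ⟨?_, hx0⟩
        have : Real.cos x < 1 := by
          rw [← Real.cos_zero]
          exact Real.cos_lt_cos_of_nonneg_of_le_pi le_rfl
            (by linarith [hx.2, Real.pi_gt_three]) hx0
        exact (mul_pos (by linarith) (Real.rpow_pos_of_pos hx0 _)).ne'
    · filter_upwards [self_mem_ae_restrict measurableSet_Ioi] with h hh
      exact mul_nonneg (phi_nonneg _) (Real.rpow_nonneg (le_of_lt hh) _)
  · rcases eq_or_ne k 0 with rfl | hk
    · simp [Real.zero_rpow (show 2 * s ≠ 0 by linarith)]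
    have hb : 0 < |(k : ℝ)| := by simpa using hk
    set b := |(k : ℝ)| with hbdef
    have hcong : ∀ h ∈ Ioi (0 : ℝ), (2 - 2 * Real.cos (k * h)) * h ^ (-1 - 2 * s)
        = b ^ (1 + 2 * s) * ((2 - 2 * Real.cos (b * h)) * (b * h) ^ (-1 - 2 * s)) := by
      intro h hh
      have hh' : 0 < h := hh
      rw [Real.mul_rpow hb.le hh'.le]
      have h1 : Real.cos (b * h) = Real.cos (k * h) := by
        rw [← Real.cos_abs (k * h), abs_mul, abs_of_pos hh']
      have h2 : b ^ (1 + 2 * s) * b ^ (-1 - 2 * s) = 1 := by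
        rw [← Real.rpow_add hb]; ring_nf; simp
      rw [h1]
      linear_combination (-(2 - 2 * Real.cos (k * h)) * h ^ (-1 - 2 * s)) * h2
    have hi : IntegrableOn (fun h : ℝ => (2 - 2 * Real.cos (b * h)) * (b * h) ^ (-1 - 2 * s))
        (Ioi 0) := by
      rw [integrableOn_Ioi_comp_mul_left_iff
        (fun h : ℝ => (2 - 2 * Real.cos h) * h ^ (-1 - 2 * s)) 0 hb]
      simpa using hg
    rw [setLIntegral_congr_fun measurableSet_Ioi (fun h hh => by rw [hcong h hh]),
      ← ofReal_integral_eq_lintegral_ofReal (hi.const_mul _)]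
    · congr 1
      rw [MeasureTheory.integral_const_mul, integral_comp_mul_left_Ioi
        (fun h : ℝ => (2 - 2 * Real.cos h) * h ^ (-1 - 2 * s)) 0 hb]
      have : b ^ (1 + 2 * s) * b⁻¹ = b ^ (2 * s) := by
        rw [Real.rpow_add hb, Real.rpow_one]; field_simp
      rw [mul_zero, smul_eq_mul, ← mul_assoc, this, mul_comm]
    · filter_upwards [self_mem_ae_restrict measurableSet_Ioi] with h hh
      have hh' : 0 < h := hh
      exact mul_nonneg (by positivity) (mul_nonneg (phi_nonneg _) (by positivity))

open MeasureTheory Set Filter Topology in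
lemma lemA (s : ℝ) (hs1 : 1 / 2 < s) (hs2 : s ≤ 1) (a b : ℤ → ℝ) (ha : ∀ k, 0 ≤ a k)
    (hb : ∀ k, 0 ≤ b k)
    (hsa : Summable fun k : ℤ => |(k : ℝ)| ^ (2 * s) * a k)
    (hsb : Summable fun k : ℤ => |(k : ℝ)| ^ (2 * s) * b k)
    (ha2 : ∀ h : ℝ, Summable fun k : ℤ => (2 - 2 * Real.cos (k * h)) * a k)
    (hb2 : ∀ h : ℝ, Summable fun k : ℤ => (2 - 2 * Real.cos (k * h)) * b k)
    (H : ∀ h : ℝ, ∑' k : ℤ, (2 - 2 * Real.cos (k * h)) * a k ≤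
      ∑' k : ℤ, (2 - 2 * Real.cos (k * h)) * b k) :
    ∑' k : ℤ, |(k : ℝ)| ^ (2 * s) * a k ≤ ∑' k : ℤ, |(k : ℝ)| ^ (2 * s) * b k := by
  rcases hs2.lt_or_eq with hs | rfl
  · obtain ⟨c, hc, hw⟩ := weight s hs1 hs
    have key : ∀ a : ℤ → ℝ, (∀ k, 0 ≤ a k) → (Summable fun k : ℤ => |(k : ℝ)| ^ (2 * s) * a k) →
        (∀ h : ℝ, Summable fun k : ℤ => (2 - 2 * Real.cos (k * h)) * a k) →
        ENNReal.ofReal (c * ∑' k : ℤ, |(k : ℝ)| ^ (2 * s) * a k) =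
        ∫⁻ h in Ioi (0 : ℝ), ENNReal.ofReal (h ^ (-1 - 2 * s) *
          ∑' k : ℤ, (2 - 2 * Real.cos (k * h)) * a k) := by
      intro a ha hsa ha2
      have e1 : ∀ h ∈ Ioi (0 : ℝ), ENNReal.ofReal (h ^ (-1 - 2 * s) *
          ∑' k : ℤ, (2 - 2 * Real.cos (k * h)) * a k) =
          ∑' k : ℤ, ENNReal.ofReal ((2 - 2 * Real.cos (k * h)) * h ^ (-1 - 2 * s))
            * ENNReal.ofReal (a k) := by
        intro h hh
        have hh' : 0 < h := hh
        rw [← tsum_mul_left, ENNReal.ofReal_tsum_of_nonneg _ ((ha2 h).mul_left _)]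
        · refine tsum_congr fun k => ?_
          rw [← ENNReal.ofReal_mul (mul_nonneg (phi_nonneg _) (by positivity))]
          congr 1; ring
        · intro k
          exact mul_nonneg (by positivity) (mul_nonneg (phi_nonneg _) (ha k))
      rw [setLIntegral_congr_fun measurableSet_Ioi e1, lintegral_tsum]
      · rw [← tsum_mul_left, ENNReal.ofReal_tsum_of_nonneg _ (hsa.mul_left _)]
        · refine tsum_congr fun k => ?_
          rw [lintegral_mul_const _ (by fun_prop), hw, ← ENNReal.ofReal_mul (by positivity)]
          congr 1; ring
        · intro k
          have := ha k
          positivity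
      · intro k
        fun_prop
    have : ENNReal.ofReal (c * ∑' k : ℤ, |(k : ℝ)| ^ (2 * s) * a k) ≤
        ENNReal.ofReal (c * ∑' k : ℤ, |(k : ℝ)| ^ (2 * s) * b k) := by
      rw [key a ha hsa ha2, key b hb hsb hb2]
      refine setLIntegral_mono' measurableSet_Ioi fun h hh => ?_
      have hh' : 0 < h := hh
      exact ENNReal.ofReal_le_ofReal (mul_le_mul_of_nonneg_left (H h) (by positivity))
    rw [ENNReal.ofReal_le_ofReal_iff] at this
    · exact le_of_mul_le_mul_left this hc
    · exact mul_nonneg hc.le (tsum_nonneg fun k => mul_nonneg (by positivity) (hb k))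
  · have e : ∀ k : ℤ, |(k : ℝ)| ^ (2 * (1 : ℝ)) = (k : ℝ) ^ 2 := by
      intro k
      rw [mul_one, Real.rpow_two, sq_abs]
    simp only [e] at hsa hsb ⊢
    refine hsa.tsum_le_of_sum_le fun F => lemB F a _ fun h _ => ?_
    calc _ ≤ ∑' k : ℤ, (2 - 2 * Real.cos (k * h)) * a k :=
          (ha2 h).sum_le_tsum _ fun k _ => mul_nonneg (phi_nonneg _) (ha k)
      _ ≤ _ := H h
      _ ≤ ∑' k : ℤ, (k : ℝ) ^ 2 * b k * h ^ 2 := by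
          refine (hb2 h).tsum_le_tsum (fun k => ?_) (hsb.mul_right _)
          have := mul_le_mul_of_nonneg_right (phi_le (k * h)) (hb k)
          linarith
      _ = _ := tsum_mul_right

lemma fourierCoef_eq (u : ℝ → ℂ) (k : ℤ) :
    ‖fourierCoef u k‖ ^ 2 = (2 * π) * ‖fourierCoeffOn Real.two_pi_pos u k‖ ^ 2 := by
  have hpi := Real.two_pi_pos
  rw [fourierCoeffOn_eq_integral, fourierCoef]
  have : ∀ x : ℝ, (fourier (-k) (x : AddCircle (2 * π - 0)) : ℂ) • u x
      = u x * Complex.exp (-Complex.I * k * x) := by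
    intro x
    rw [fourier_coe_apply, smul_eq_mul, mul_comm]
    congr 2
    have : (π : ℂ) ≠ 0 := by exact_mod_cast Real.pi_ne_zero
    push_cast
    field_simp
    ring
  simp only [this]
  rw [norm_mul, norm_smul, mul_pow, mul_pow, ← mul_assoc]
  congr 1
  rw [Complex.norm_real, Real.norm_of_nonneg (by positivity), Real.norm_of_nonneg (by
    rw [sub_zero]; positivity), ← Real.rpow_natCast, ← Real.rpow_mul hpi.le]
  norm_num
  rw [Real.rpow_neg_one]
  field_simp

open MeasureTheory Set in
lemma parseval (u : ℝ → ℂ) (hu : Continuous u) :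
    HasSum (fun k : ℤ => ‖fourierCoef u k‖ ^ 2) (∫ y in (0 : ℝ)..(2 * π), ‖u y‖ ^ 2) := by
  have hpi := Real.two_pi_pos
  have hL : MemLp u 2 (volume.restrict (Ioc 0 (2 * π))) :=
    by
    obtain ⟨M, hM⟩ := (isCompact_Icc (a := (0 : ℝ)) (b := 2 * π)).exists_bound_of_continuousOn
      hu.continuousOn
    refine MemLp.of_bound hu.aestronglyMeasurable M ?_
    filter_upwards [self_mem_ae_restrict measurableSet_Ioc] with y hy
    exact hM y ⟨hy.1.le, hy.2⟩
  have := (hasSum_sq_fourierCoeffOn hpi hL).mul_left (2 * π)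
  simp only [fourierCoef_eq]
  have e : 2 * π * ((2 * π - 0)⁻¹ • ∫ y in (0 : ℝ)..(2 * π), ‖u y‖ ^ 2)
      = ∫ y in (0 : ℝ)..(2 * π), ‖u y‖ ^ 2 := by
    rw [sub_zero, smul_eq_mul, mul_inv_cancel_left₀ hpi.ne']
  rwa [e] at this

lemma fourierCoef_shift (u : ℝ → ℂ) (hu : Continuous u) (hp : Function.Periodic u (2 * π))
    (h : ℝ) (k : ℤ) :
    fourierCoef (fun y => u (y + h) - u y) k =
      (Complex.exp (Complex.I * k * h) - 1) * fourierCoef u k := by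
  have e : ∀ y : ℝ, (u (y + h) - u y) * Complex.exp (-Complex.I * k * y) =
      Complex.exp (Complex.I * k * h) *
        (u (y + h) * Complex.exp (-Complex.I * k * (y + h : ℝ)))
        - u y * Complex.exp (-Complex.I * k * y) := by
    intro y
    have : Complex.exp (-Complex.I * k * y) = Complex.exp (Complex.I * k * h) *
        Complex.exp (-Complex.I * k * (y + h : ℝ)) := by
      rw [← Complex.exp_add]; congr 1; push_cast; ring
    rw [sub_mul]
    nth_rewrite 1 [this]
    ring
  have hper : Function.Periodic (fun y : ℝ => u y * Complex.exp (-Complex.I * k * y)) (2 * π) := by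
    intro y
    simp only [hp y]
    congr 1
    rw [Complex.exp_eq_exp_iff_exists_int]
    exact ⟨-k, by push_cast; ring⟩
  unfold fourierCoef
  simp only [e]
  rw [intervalIntegral.integral_sub, intervalIntegral.integral_const_mul,
    intervalIntegral.integral_comp_add_right (fun y : ℝ => u y * Complex.exp (-Complex.I * k * y))]
  · have := hper.intervalIntegral_add_eq h 0
    rw [zero_add, add_comm (2 * π) h, this, zero_add]
    ring
  · exact (by fun_prop : Continuous _).intervalIntegrable _ _
  · exact (by fun_prop : Continuous _).intervalIntegrable _ _

def DD (u : ℝ → ℂ) (h : ℝ) : ℝ := ∫ y in (0 : ℝ)..(2 * π), ‖u (y + h) - u y‖ ^ 2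

lemma hasSum_DD (u : ℝ → ℂ) (hu : Continuous u) (hp : Function.Periodic u (2 * π)) (h : ℝ) :
    HasSum (fun k : ℤ => (2 - 2 * Real.cos (k * h)) * ‖fourierCoef u k‖ ^ 2) (DD u h) := by
  have := parseval (fun y => u (y + h) - u y) (by fun_prop)
  refine (hasSum_congr_aux fun k => ?_).2 this
  rw [fourierCoef_shift u hu hp, norm_mul, mul_pow]
  congr 1
  have e : Complex.exp (Complex.I * k * h) = Real.cos (k * h) + Real.sin (k * h) * Complex.I := by
    rw [Complex.ofReal_cos, Complex.ofReal_sin, ← Complex.exp_mul_I]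
    congr 1; push_cast; ring
  rw [e, ← Complex.normSq_eq_norm_sq, Complex.normSq_apply]
  simp only [Complex.sub_re, Complex.sub_im, Complex.add_re, Complex.add_im, Complex.ofReal_re,
    Complex.ofReal_im, Complex.mul_re, Complex.mul_im, Complex.I_re, Complex.I_im,
    Complex.one_re, Complex.one_im]
  have := Real.sin_sq_add_cos_sq (k * h)
  linarith

lemma bdd_of_periodic (u : ℝ → ℂ) (hu : Continuous u) (hp : Function.Periodic u (2 * π)) :
    ∃ M : ℝ, ∀ y, ‖u y‖ ≤ M := by
  obtain ⟨M, hM⟩ := (isCompact_Icc (a := (0 : ℝ)) (b := 2 * π)).exists_bound_of_continuousOn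
    hu.continuousOn
  refine ⟨M, fun y => ?_⟩
  obtain ⟨z, hz, he⟩ := hp.exists_mem_Ico₀ Real.two_pi_pos y
  rw [he]
  exact hM z ⟨hz.1, hz.2.le⟩

lemma DD_le (u : ℝ → ℂ) (hu : ContDiff ℝ 1 u) (hp : Function.Periodic u (2 * π)) :
    ∃ K : ℝ, ∀ h, DD u h ≤ K * h ^ 2 := by
  have hp' : Function.Periodic (deriv u) (2 * π) := by
    intro y
    rw [← deriv_comp_add_const]
    congr 1
    funext z
    exact hp z
  obtain ⟨L, hL⟩ := bdd_of_periodic (deriv u) (hu.continuous_deriv le_rfl) hp'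
  have hc := hu.continuous
  refine ⟨2 * π * L ^ 2, fun h => ?_⟩
  have h1 : ∀ y, ‖u (y + h) - u y‖ ≤ L * |h| := by
    intro y
    have := convex_univ.norm_image_sub_le_of_norm_deriv_le (f := u) (C := L) (x := y) (y := y + h)
      (fun x _ => (hu.differentiable one_ne_zero) x) (fun x _ => hL x) trivial trivial
    simpa using this
  calc DD u h ≤ ∫ y in (0 : ℝ)..(2 * π), (L * |h|) ^ 2 := by
        refine intervalIntegral.integral_mono_on Real.two_pi_pos.le
          ((by fun_prop : Continuous _).intervalIntegrable _ _) (by simp) fun y _ => ?_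
        exact pow_le_pow_left₀ (norm_nonneg _) (h1 y) 2
    _ = _ := by simp [mul_pow]; ring

lemma summable_sob (s : ℝ) (hs1 : 1 / 2 < s) (hs2 : s ≤ 1) (u : ℝ → ℂ) (hu : ContDiff ℝ 1 u)
    (hp : Function.Periodic u (2 * π)) :
    Summable fun k : ℤ => |(k : ℝ)| ^ (2 * s) * ‖fourierCoef u k‖ ^ 2 := by
  obtain ⟨K, hK⟩ := DD_le u hu hp
  have h1 : Summable fun k : ℤ => (k : ℝ) ^ 2 * ‖fourierCoef u k‖ ^ 2 := by
    refine summable_of_sum_le (c := K) (fun k => by positivity) fun F => lemB F _ K fun h _ => ?_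
    have hs := hasSum_DD u hu.continuous hp h
    exact (sum_le_hasSum F (fun k _ => mul_nonneg (phi_nonneg _) (by positivity)) hs).trans (hK h)
  refine Summable.of_nonneg_of_le (fun k => by positivity) (fun k => ?_) h1
  refine mul_le_mul_of_nonneg_right ?_ (by positivity)
  rcases eq_or_ne k 0 with rfl | hk
  · simp [Real.zero_rpow (show 2 * s ≠ 0 by linarith)]
  · have : (1 : ℝ) ≤ |(k : ℝ)| := by exact_mod_cast Int.one_le_abs hk
    rw [← sq_abs, ← Real.rpow_two]
    exact Real.rpow_le_rpow_of_exponent_le this (by linarith)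

lemma DD_mul (u v : ℝ → ℂ) (hu : Continuous u) (hv : Continuous v) (M N : ℝ)
    (hM : ∀ y, ‖u y‖ ≤ M) (hN : ∀ y, ‖v y‖ ≤ N) (h : ℝ) :
    DD (fun y => u y * v y) h ≤ 2 * M ^ 2 * DD v h + 2 * N ^ 2 * DD u h := by
  unfold DD
  rw [← intervalIntegral.integral_const_mul, ← intervalIntegral.integral_const_mul,
    ← intervalIntegral.integral_add ((by fun_prop : Continuous _).intervalIntegrable _ _)
      ((by fun_prop : Continuous _).intervalIntegrable _ _)]
  refine intervalIntegral.integral_mono_on Real.two_pi_pos.le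
    ((by fun_prop : Continuous _).intervalIntegrable _ _)
    ((by fun_prop : Continuous _).intervalIntegrable _ _) fun y _ => ?_
  have e : u (y + h) * v (y + h) - u y * v y =
      u (y + h) * (v (y + h) - v y) + v y * (u (y + h) - u y) := by ring
  have h1 : ‖u (y + h) * v (y + h) - u y * v y‖ ≤
      M * ‖v (y + h) - v y‖ + N * ‖u (y + h) - u y‖ := by
    rw [e]
    refine (norm_add_le _ _).trans ?_
    rw [norm_mul, norm_mul]
    gcongr
    exacts [hM _, hN _]
  have h2 := pow_le_pow_left₀ (norm_nonneg _) h1 2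
  nlinarith [sq_nonneg (M * ‖v (y + h) - v y‖ - N * ‖u (y + h) - u y‖)]

/-- Lemma 3.2 (fractional calculus on `𝕋`), bilinear version: for `s ∈ (1/2, 1]` there is a
constant `C > 0` such that
`‖u₁u₂‖_{Ḣˢ} ≤ C (‖u₁‖_{Ḣˢ} ‖u₂‖_{L^∞} + ‖u₂‖_{Ḣˢ} ‖u₁‖_{L^∞})`
for all `C¹` functions `u₁ u₂ : 𝕋 → ℂ`. -/
theorem fractional_product_rule (s : ℝ) (hs1 : 1 / 2 < s) (hs2 : s ≤ 1) :
    ∃ C : ℝ, 0 < C ∧ ∀ u₁ u₂ : ℝ → ℂ, ContDiff ℝ 1 u₁ → ContDiff ℝ 1 u₂ →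
      Function.Periodic u₁ (2 * π) → Function.Periodic u₂ (2 * π) →
      Real.sqrt (sobNormSq s (fun y => u₁ y * u₂ y)) ≤
        C * (Real.sqrt (sobNormSq s u₁) * (⨆ y : ℝ, ‖u₂ y‖) +
          Real.sqrt (sobNormSq s u₂) * (⨆ y : ℝ, ‖u₁ y‖)) := by
  refine ⟨2, by norm_num, fun u₁ u₂ h1 h2 p1 p2 => ?_⟩
  have bd : ∀ u : ℝ → ℂ, Continuous u → Function.Periodic u (2 * π) →
      ∀ y, ‖u y‖ ≤ ⨆ y : ℝ, ‖u y‖ := by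
    intro u hu hp y
    obtain ⟨M, hM⟩ := bdd_of_periodic u hu hp
    exact le_ciSup (f := fun y => ‖u y‖) ⟨M, by rintro _ ⟨z, rfl⟩; exact hM z⟩ y
  have b1 := bd u₁ h1.continuous p1
  have b2 := bd u₂ h2.continuous p2
  set M := ⨆ y : ℝ, ‖u₁ y‖
  set N := ⨆ y : ℝ, ‖u₂ y‖
  have hM : 0 ≤ M := (norm_nonneg _).trans (b1 0)
  have hN : 0 ≤ N := (norm_nonneg _).trans (b2 0)
  have h12 : ContDiff ℝ 1 (fun y => u₁ y * u₂ y) := h1.mul h2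
  have p12 : Function.Periodic (fun y => u₁ y * u₂ y) (2 * π) := p1.mul p2
  have s1 := summable_sob s hs1 hs2 u₁ h1 p1
  have s2 := summable_sob s hs1 hs2 u₂ h2 p2
  have s12 := summable_sob s hs1 hs2 _ h12 p12
  have d1 := hasSum_DD u₁ h1.continuous p1
  have d2 := hasSum_DD u₂ h2.continuous p2
  have d12 := hasSum_DD _ h12.continuous p12
  have sb : HasSum (fun k : ℤ => |(k : ℝ)| ^ (2 * s) *
      (2 * M ^ 2 * ‖fourierCoef u₂ k‖ ^ 2 + 2 * N ^ 2 * ‖fourierCoef u₁ k‖ ^ 2))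
      (2 * M ^ 2 * sobNormSq s u₂ + 2 * N ^ 2 * sobNormSq s u₁) := by
    exact (hasSum_congr_aux fun k => by ring).2
      ((s2.hasSum.mul_left (2 * M ^ 2)).add (s1.hasSum.mul_left (2 * N ^ 2)))
  have db : ∀ h : ℝ, HasSum (fun k : ℤ => (2 - 2 * Real.cos (k * h)) *
      (2 * M ^ 2 * ‖fourierCoef u₂ k‖ ^ 2 + 2 * N ^ 2 * ‖fourierCoef u₁ k‖ ^ 2))
      (2 * M ^ 2 * DD u₂ h + 2 * N ^ 2 * DD u₁ h) := by
    intro h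
    exact (hasSum_congr_aux fun k => by ring).2
      (((d2 h).mul_left (2 * M ^ 2)).add ((d1 h).mul_left (2 * N ^ 2)))
  have key : sobNormSq s (fun y => u₁ y * u₂ y) ≤
      2 * M ^ 2 * sobNormSq s u₂ + 2 * N ^ 2 * sobNormSq s u₁ := by
    rw [← sb.tsum_eq]
    refine lemA s hs1 hs2 _ _ (fun k => by positivity) (fun k => by positivity) s12 sb.summable
      (fun h => (d12 h).summable) (fun h => (db h).summable) fun h => ?_
    rw [(d12 h).tsum_eq, (db h).tsum_eq]
    exact DD_mul u₁ u₂ h1.continuous h2.continuous M N b1 b2 h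
  have n1 : 0 ≤ sobNormSq s u₁ := tsum_nonneg fun k => by positivity
  have n2 : 0 ≤ sobNormSq s u₂ := tsum_nonneg fun k => by positivity
  refine Real.sqrt_le_iff.2 ⟨by positivity, key.trans ?_⟩
  have q1 := Real.sq_sqrt n1
  have q2 := Real.sq_sqrt n2
  set X := Real.sqrt (sobNormSq s u₁)
  set Y := Real.sqrt (sobNormSq s u₂)
  rw [← q1, ← q2]
  have hX : 0 ≤ X := Real.sqrt_nonneg _
  have hY : 0 ≤ Y := Real.sqrt_nonneg _
  nlinarith [mul_nonneg (mul_nonneg hX hN) (mul_nonneg hY hM), sq_nonneg (X * N), sq_nonneg (Y * M)]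

end
end

section
/- Suppose C > 0 is a constant such that ‖v‖_{L⁴(𝕋)}⁴ ≤ C ‖v‖_{L²(𝕋)}³ ‖v'‖_{L²(𝕋)} for every continuously differentiable v : 𝕋 → ℂ with ∫_𝕋 v dy = 0. Then for every u ∈ H¹(ℝ²×𝕋), setting w := u − m(u) with m(u)(x,y) := (2π)^{-1} ∫_𝕋 u(x, y') dy', one has ‖w‖_{L⁴(ℝ²×𝕋)}⁴ ≤ C · ‖w‖_{L⁶ₓL²ᵧ}³ · ‖∂ᵧu‖_{L²(ℝ²×𝕋)}, where ‖w‖_{L⁶ₓL²ᵧ} := ( ∫_{ℝ²} ( ∫_𝕋 |w(x,y)|² dy )³ dx )^{1/6}. -/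
open MeasureTheory Real
open scoped ENNReal

noncomputable section

/-- The measure on `ℝ² × 𝕋`: the product of Lebesgue measure on `ℝ²` with Lebesgue
measure on a period interval `(0, 2π]` (realising `𝕋 = ℝ/(2πℤ)` with total mass `2π`). -/
def μT : Measure (R2 × ℝ) :=
  (volume : Measure R2).prod ((volume : Measure ℝ).restrict (Set.Ioc 0 (2 * π)))

/-- The pointwise norm of the gradient in the `ℝ²`-variable, `‖∇ₓu(x,y)‖`. -/
def gradxNorm (u : R2 × ℝ → ℂ) (p : R2 × ℝ) : ℝ :=
  ‖fderiv ℝ (fun x : R2 => u (x, p.2)) p.1‖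

/-- The derivative in the `𝕋`-variable, `∂ᵧu(x,y)`. -/
def dyDeriv (u : R2 × ℝ → ℂ) (p : R2 × ℝ) : ℂ :=
  deriv (fun y : ℝ => u (p.1, y)) p.2

/-- `u ∈ H¹(ℝ²×𝕋)`: `u` is differentiable, `2π`-periodic in the second variable, and
`u, ∇ₓu, ∂ᵧu ∈ L²(ℝ²×𝕋)`. -/
def IsH1T (u : R2 × ℝ → ℂ) : Prop :=
  Differentiable ℝ u ∧ (∀ (x : R2) (y : ℝ), u (x, y + 2 * π) = u (x, y)) ∧
    MemLp u 2 μT ∧ MemLp (gradxNorm u) 2 μT ∧ MemLp (dyDeriv u) 2 μT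

/-- The mean in the `𝕋`-variable, `m(u)(x,y) = (2π)⁻¹ ∫_𝕋 u(x,y') dy'`. -/
def ymean (u : R2 × ℝ → ℂ) (p : R2 × ℝ) : ℂ :=
  (2 * π : ℝ)⁻¹ • ∫ y in (0 : ℝ)..(2 * π), u (p.1, y)

/-- The mixed norm `‖w‖_{L⁶ₓL²ᵧ} = (∫_{ℝ²} (∫_𝕋 |w(x,y)|² dy)³ dx)^{1/6}`. -/
def mixedL6L2 (w : R2 × ℝ → ℂ) : ℝ≥0∞ :=
  (∫⁻ x, (∫⁻ y in Set.Ioc 0 (2 * π), (‖w (x, y)‖₊ : ℝ≥0∞) ^ (2 : ℕ)) ^ (3 : ℕ)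
      ∂(volume : Measure R2)) ^ ((1 : ℝ) / 6)

lemma per_lint {T : ℝ} (hT : 0 < T) (F : ℝ → ℝ≥0∞) (hF : Function.Periodic F T) (s : ℝ) :
    ∫⁻ y in Set.Ioc 0 T, F (y + s) = ∫⁻ y in Set.Ioc 0 T, F y := by
  have h1 := (measurePreserving_add_right (volume : Measure ℝ) s).setLIntegral_comp_preimage_emb
    (measurableEmbedding_addRight s) F (Set.Ioc s (s + T))
  have h2 : (fun x : ℝ => x + s) ⁻¹' Set.Ioc s (s + T) = Set.Ioc 0 T := by
    ext x; simp only [Set.mem_preimage, Set.mem_Ioc]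
    constructor <;> rintro ⟨a, b⟩ <;> constructor <;> linarith
  rw [h2] at h1
  rw [h1]
  have h3 := (isAddFundamentalDomain_Ioc hT s).setLIntegral_eq (isAddFundamentalDomain_Ioc hT 0) F
    hF.map_vadd_zmultiples
  simpa using h3

lemma cs_sq {α : Type*} [MeasurableSpace α] (μ : Measure α) (g : α → ℝ≥0∞) (hg : AEMeasurable g μ) :
    (∫⁻ a, g a ∂μ) ^ 2 ≤ μ Set.univ * ∫⁻ a, g a ^ 2 ∂μ := by
  have h := ENNReal.lintegral_mul_le_Lp_mul_Lq μ Real.HolderConjugate.two_two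
    (f := fun _ => 1) aemeasurable_const hg
  simp only [Pi.mul_apply, one_mul, ENNReal.one_rpow, lintegral_const, ENNReal.rpow_ofNat] at h
  calc _ ≤ _ := pow_le_pow_left' h 2
    _ = _ := by
      rw [mul_pow, ← ENNReal.rpow_mul_natCast, ← ENNReal.rpow_mul_natCast]
      norm_num

/-- Contraction of the Steklov average. -/
lemma steklov_contr {T : ℝ} (hT : 0 < T) (f : ℝ → ℂ) (hfm : Measurable f)
    (hf : Function.Periodic f T) {h : ℝ} (hh : 0 < h) :
    ∫⁻ y in Set.Ioc 0 T, ‖h⁻¹ • ∫ s in (0 : ℝ)..h, f (y + s)‖ₑ ^ 2 ≤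
      ∫⁻ y in Set.Ioc 0 T, ‖f y‖ₑ ^ 2 := by
  have hh0 : ENNReal.ofReal h ≠ 0 := by simpa using hh
  have hpt : ∀ y : ℝ, ‖h⁻¹ • ∫ s in (0 : ℝ)..h, f (y + s)‖ₑ ^ 2 ≤
      (ENNReal.ofReal h)⁻¹ * ∫⁻ s in Set.Ioc 0 h, ‖f (y + s)‖ₑ ^ 2 := by
    intro y
    rw [intervalIntegral.integral_of_le hh.le, enorm_smul, mul_pow]
    have e1 : ‖h⁻¹‖ₑ = (ENNReal.ofReal h)⁻¹ := by
      rw [Real.enorm_eq_ofReal (by positivity), ENNReal.ofReal_inv_of_pos hh]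
    rw [e1]
    have h2 := cs_sq (volume.restrict (Set.Ioc 0 h)) (fun s => ‖f (y + s)‖ₑ)
      (by fun_prop)
    simp only [Measure.restrict_apply MeasurableSet.univ, Set.univ_inter, Real.volume_Ioc, sub_zero] at h2
    calc _ ≤ (ENNReal.ofReal h)⁻¹ ^ 2 * (∫⁻ s in Set.Ioc 0 h, ‖f (y + s)‖ₑ) ^ 2 := by
          gcongr; exact enorm_integral_le_lintegral_enorm _
      _ ≤ (ENNReal.ofReal h)⁻¹ ^ 2 * (ENNReal.ofReal h * ∫⁻ s in Set.Ioc 0 h, ‖f (y + s)‖ₑ ^ 2) := by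
          gcongr
      _ = _ := by
          rw [pow_two, mul_assoc, ← mul_assoc (ENNReal.ofReal h)⁻¹ (ENNReal.ofReal h),
            ENNReal.inv_mul_cancel hh0 ENNReal.ofReal_ne_top, one_mul]
  calc _ ≤ ∫⁻ y in Set.Ioc 0 T, (ENNReal.ofReal h)⁻¹ * ∫⁻ s in Set.Ioc 0 h, ‖f (y + s)‖ₑ ^ 2 :=
        lintegral_mono hpt
    _ = (ENNReal.ofReal h)⁻¹ * ∫⁻ y in Set.Ioc 0 T, ∫⁻ s in Set.Ioc 0 h, ‖f (y + s)‖ₑ ^ 2 :=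
        lintegral_const_mul' _ _ (by simpa using hh)
    _ = (ENNReal.ofReal h)⁻¹ * ∫⁻ s in Set.Ioc 0 h, ∫⁻ y in Set.Ioc 0 T, ‖f (y + s)‖ₑ ^ 2 := by
        rw [lintegral_lintegral_swap]
        exact Measurable.aemeasurable (by unfold Function.uncurry; fun_prop)
    _ = (ENNReal.ofReal h)⁻¹ * ∫⁻ s in Set.Ioc 0 h, ∫⁻ y in Set.Ioc 0 T, ‖f y‖ₑ ^ 2 := by
        congr 1
        refine lintegral_congr fun s => ?_
        exact per_lint hT (fun y => ‖f y‖ₑ ^ 2) (fun y => by simp only [hf y]) s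
    _ = _ := by
        simp only [lintegral_const, Measure.restrict_apply MeasurableSet.univ, Set.univ_inter,
          Real.volume_Ioc, sub_zero]
        rw [mul_comm (lintegral _ _), ← mul_assoc, ENNReal.inv_mul_cancel hh0 ENNReal.ofReal_ne_top,
          one_mul]

lemma ofReal_int {T : ℝ} (hT : 0 < T) (f : ℝ → ℂ) (hf : Continuous f) (n : ℕ) :
    ENNReal.ofReal (∫ y in (0 : ℝ)..T, ‖f y‖ ^ n) = ∫⁻ y in Set.Ioc 0 T, ‖f y‖ₑ ^ n := by
  rw [intervalIntegral.integral_of_le hT.le, ofReal_integral_eq_lintegral_ofReal]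
  · refine lintegral_congr fun y => ?_
    rw [ENNReal.ofReal_pow (norm_nonneg _), ofReal_norm]
  · have : Continuous fun y => ‖f y‖ ^ n := by fun_prop
    exact (this.intervalIntegrable 0 T).1
  · exact Filter.Eventually.of_forall fun y => by positivity

lemma fiber (C : ℝ) (hC : 0 < C)
    (hGN : ∀ v : ℝ → ℂ, ContDiff ℝ 1 v → Function.Periodic v (2 * π) →
      (∫ y in (0 : ℝ)..(2 * π), v y) = 0 →
      (∫ y in (0 : ℝ)..(2 * π), ‖v y‖ ^ 4) ≤
        C * (∫ y in (0 : ℝ)..(2 * π), ‖v y‖ ^ 2) ^ ((3 : ℝ) / 2) *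
          (∫ y in (0 : ℝ)..(2 * π), ‖deriv v y‖ ^ 2) ^ ((1 : ℝ) / 2))
    (v : ℝ → ℂ) (hv : Differentiable ℝ v) (hp : Function.Periodic v (2 * π))
    (hm : (∫ y in (0 : ℝ)..(2 * π), v y) = 0)
    (hfin : ∫⁻ y in Set.Ioc 0 (2 * π), ‖deriv v y‖ₑ ^ 2 ≠ ∞) :
    ∫⁻ y in Set.Ioc 0 (2 * π), ‖v y‖ₑ ^ 4 ≤
      ENNReal.ofReal C * (∫⁻ y in Set.Ioc 0 (2 * π), ‖v y‖ₑ ^ 2) ^ ((3 : ℝ) / 2) *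
        (∫⁻ y in Set.Ioc 0 (2 * π), ‖deriv v y‖ₑ ^ 2) ^ ((1 : ℝ) / 2) := by
  have hT : 0 < 2 * π := by positivity
  have hvc : Continuous v := hv.continuous
  have hpd : Function.Periodic (deriv v) (2 * π) := by
    intro y
    rw [← deriv_comp_add_const]
    congr 1
    funext z; exact hp z
  have hdi : ∀ a b, IntervalIntegrable (deriv v) volume a b := by
    intro a b
    refine hpd.intervalIntegrable₀ hT.ne' ?_ a b
    rw [intervalIntegrable_iff_integrableOn_Ioc_of_le hT.le]
    have : MemLp (deriv v) 2 (volume.restrict (Set.Ioc 0 (2 * π))) := by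
      refine ⟨(measurable_deriv v).aestronglyMeasurable, ?_⟩
      rw [eLpNorm_lt_top_iff_lintegral_rpow_enorm_lt_top (by simp) (by simp)]
      simpa [lt_top_iff_ne_top] using hfin
    exact this.integrable (by norm_num)
  set F : ℝ → ℂ := fun y => ∫ z in (0 : ℝ)..y, v z with hFdef
  have hF : ∀ y, HasDerivAt F (v y) y := fun y => (hvc.integral_hasStrictDerivAt 0 y).hasDerivAt
  have hFc : Continuous F := continuous_iff_continuousAt.2 fun y => (hF y).continuousAt
  have hFp : Function.Periodic F (2 * π) := by
    intro y
    have h1 : F (y + 2 * π) - F y = ∫ z in y..(y + 2 * π), v z :=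
      intervalIntegral.integral_interval_sub_left (hvc.intervalIntegrable _ _)
        (hvc.intervalIntegrable _ _)
    rw [hp.intervalIntegral_add_eq y 0, zero_add, hm] at h1
    exact sub_eq_zero.1 h1
  -- Steklov averages
  set A : ℝ → ℝ → ℂ := fun h y => h⁻¹ • (F (y + h) - F y) with hA
  have hA1 : ∀ h y, A h y = h⁻¹ • ∫ s in (0 : ℝ)..h, v (y + s) := by
    intro h y
    simp only [hA]
    rw [intervalIntegral.integral_comp_add_left, add_zero]
    congr 1
    exact intervalIntegral.integral_interval_sub_left (hvc.intervalIntegrable _ _)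
        (hvc.intervalIntegrable _ _)
  have hAd : ∀ h y, HasDerivAt (A h) (h⁻¹ • (v (y + h) - v y)) y := by
    intro h y
    exact (((hF (y + h)).comp_add_const y h).sub (hF y)).const_smul h⁻¹
  have hAd' : ∀ h, deriv (A h) = fun y => h⁻¹ • (v (y + h) - v y) := fun h =>
    funext fun y => (hAd h y).deriv
  have hA2 : ∀ h y, deriv (A h) y = h⁻¹ • ∫ s in (0 : ℝ)..h, deriv v (y + s) := by
    intro h y
    rw [hAd', intervalIntegral.integral_comp_add_left, add_zero,
      intervalIntegral.integral_eq_sub_of_hasDerivAt (fun z _ => (hv z).hasDerivAt) (hdi _ _)]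
  have hAcd : ∀ h, ContDiff ℝ 1 (A h) := by
    intro h
    rw [contDiff_one_iff_deriv]
    refine ⟨fun y => (hAd h y).differentiableAt, ?_⟩
    rw [hAd']; fun_prop
  have hAp : ∀ h, Function.Periodic (A h) (2 * π) := by
    intro h y
    simp only [hA]
    rw [show y + 2 * π + h = (y + h) + 2 * π by ring, hFp, hFp]
  have hAm : ∀ h, (∫ y in (0 : ℝ)..(2 * π), A h y) = 0 := by
    intro h
    simp only [hA]
    rw [intervalIntegral.integral_smul, intervalIntegral.integral_sub
      (Continuous.intervalIntegrable (by fun_prop) _ _) (hFc.intervalIntegrable _ _),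
      intervalIntegral.integral_comp_add_right, zero_add, add_comm (2 * π) h,
      hFp.intervalIntegral_add_eq h 0, zero_add, sub_self, smul_zero]
  have hbd : ∀ h, 0 < h → ∫⁻ y in Set.Ioc 0 (2 * π), ‖A h y‖ₑ ^ 4 ≤
      ENNReal.ofReal C * (∫⁻ y in Set.Ioc 0 (2 * π), ‖v y‖ₑ ^ 2) ^ ((3 : ℝ) / 2) *
        (∫⁻ y in Set.Ioc 0 (2 * π), ‖deriv v y‖ₑ ^ 2) ^ ((1 : ℝ) / 2) := by
    intro h hh
    have h1 := ENNReal.ofReal_le_ofReal (hGN (A h) (hAcd h) (hAp h) (hAm h))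
    have hi2 : 0 ≤ ∫ y in (0 : ℝ)..(2 * π), ‖A h y‖ ^ 2 :=
      intervalIntegral.integral_nonneg hT.le fun y _ => by positivity
    have hi3 : 0 ≤ ∫ y in (0 : ℝ)..(2 * π), ‖deriv (A h) y‖ ^ 2 :=
      intervalIntegral.integral_nonneg hT.le fun y _ => by positivity
    rw [ENNReal.ofReal_mul (by positivity), ENNReal.ofReal_mul hC.le,
      ← ENNReal.ofReal_rpow_of_nonneg hi2 (by norm_num),
      ← ENNReal.ofReal_rpow_of_nonneg hi3 (by norm_num),
      ofReal_int hT _ (hAcd h).continuous, ofReal_int hT _ (hAcd h).continuous,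
      ofReal_int hT _ ((hAcd h).continuous_deriv le_rfl)] at h1
    refine h1.trans ?_
    have c1 := steklov_contr hT v hvc.measurable hp hh
    have c2 := steklov_contr hT (deriv v) (measurable_deriv v) hpd hh
    simp only [← hA1] at c1
    simp only [← hA2] at c2
    gcongr
  have hlim : ∀ y, Filter.Tendsto (fun h => ‖A h y‖ₑ ^ 4) (nhdsWithin 0 (Set.Ioi 0))
      (nhds (‖v y‖ₑ ^ 4)) := by
    intro y
    exact ENNReal.Tendsto.pow ((hF y).tendsto_slope_zero_right.enorm)
  calc ∫⁻ y in Set.Ioc 0 (2 * π), ‖v y‖ₑ ^ 4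
      = ∫⁻ y in Set.Ioc 0 (2 * π), Filter.liminf (fun h => ‖A h y‖ₑ ^ 4)
          (nhdsWithin 0 (Set.Ioi 0)) := by
        refine lintegral_congr fun y => ((hlim y).liminf_eq).symm
    _ ≤ Filter.liminf (fun h => ∫⁻ y in Set.Ioc 0 (2 * π), ‖A h y‖ₑ ^ 4)
          (nhdsWithin 0 (Set.Ioi 0)) := by
        refine lintegral_liminf_le fun h => ?_
        have := (hAcd h).continuous.measurable
        fun_prop
    _ ≤ _ := by
        refine Filter.liminf_le_of_frequently_le' (Filter.Eventually.frequently ?_)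
        filter_upwards [self_mem_nhdsWithin] with h hh using hbd h hh

/-- The estimate for the mean-zero part in the proof of Proposition 1.4: if `C > 0` is such
that `‖v‖_{L⁴(𝕋)}⁴ ≤ C ‖v‖_{L²(𝕋)}³ ‖v'‖_{L²(𝕋)}` for all `C¹` mean-zero `v : 𝕋 → ℂ`, then
for every `u ∈ H¹(ℝ²×𝕋)`, with `w = u − m(u)`,
`‖w‖_{L⁴(ℝ²×𝕋)}⁴ ≤ C ‖w‖_{L⁶ₓL²ᵧ}³ ‖∂ᵧu‖_{L²(ℝ²×𝕋)}`. -/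
theorem mean_zero_part_estimate (C : ℝ) (hC : 0 < C)
    (hGN : ∀ v : ℝ → ℂ, ContDiff ℝ 1 v → Function.Periodic v (2 * π) →
      (∫ y in (0 : ℝ)..(2 * π), v y) = 0 →
      (∫ y in (0 : ℝ)..(2 * π), ‖v y‖ ^ 4) ≤
        C * (∫ y in (0 : ℝ)..(2 * π), ‖v y‖ ^ 2) ^ ((3 : ℝ) / 2) *
          (∫ y in (0 : ℝ)..(2 * π), ‖deriv v y‖ ^ 2) ^ ((1 : ℝ) / 2))
    (u : R2 × ℝ → ℂ) (hu : IsH1T u) :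
    eLpNorm (fun p => u p - ymean u p) 4 μT ^ (4 : ℕ) ≤
      ENNReal.ofReal C * mixedL6L2 (fun p => u p - ymean u p) ^ (3 : ℕ) *
        eLpNorm (dyDeriv u) 2 μT := by
  obtain ⟨hd, hper, -, -, hdy⟩ := hu
  have hT : 0 < 2 * π := by positivity
  have huc : Continuous u := hd.continuous
  have hmean : Measurable (ymean u) := by
    have h1 : StronglyMeasurable fun x : R2 => ∫ y in Set.Ioc 0 (2 * π), u (x, y) :=
      huc.stronglyMeasurable.integral_prod_right' (ν := volume.restrict (Set.Ioc 0 (2 * π)))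
    have h2 : ymean u = fun p => (2 * π : ℝ)⁻¹ • ∫ y in Set.Ioc 0 (2 * π), u (p.1, y) := by
      funext p
      simp only [ymean, intervalIntegral.integral_of_le hT.le]
    rw [h2]
    exact (h1.measurable.comp measurable_fst).const_smul ((2 * π : ℝ)⁻¹)
  set w : R2 × ℝ → ℂ := fun p => u p - ymean u p with hw
  have hwm : Measurable w := huc.measurable.sub hmean
  have hdm : AEMeasurable (fun p => ‖dyDeriv u p‖ₑ ^ 2) μT := hdy.1.enorm.pow_const 2
  set a : R2 → ℝ≥0∞ := fun x => ∫⁻ y in Set.Ioc 0 (2 * π), ‖w (x, y)‖ₑ ^ 2 with ha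
  set b : R2 → ℝ≥0∞ := fun x => ∫⁻ y in Set.Ioc 0 (2 * π), ‖dyDeriv u (x, y)‖ₑ ^ 2 with hb
  have ham : Measurable a := by
    have : Measurable fun p => ‖w p‖ₑ ^ 2 := by fun_prop
    exact this.lintegral_prod_right'
  have hbm : AEMeasurable b volume := hdm.lintegral_prod_right'
  have hbe : ∫⁻ x, b x = ∫⁻ p, ‖dyDeriv u p‖ₑ ^ 2 ∂μT := (lintegral_prod _ hdm).symm
  have hdn : eLpNorm (dyDeriv u) 2 μT = (∫⁻ x, b x) ^ ((1 : ℝ) / 2) := by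
    rw [hbe, eLpNorm_eq_lintegral_rpow_enorm_toReal (by simp) (by simp)]
    simp
  have hbfin : ∫⁻ x, b x ≠ ∞ := by
    intro h
    have := hdy.2
    rw [hdn, h] at this
    simp at this
  have hL4 : eLpNorm w 4 μT ^ (4 : ℕ) = ∫⁻ x, ∫⁻ y in Set.Ioc 0 (2 * π), ‖w (x, y)‖ₑ ^ 4 := by
    have h1 := lintegral_prod (μ := (volume : Measure R2))
      (ν := (volume : Measure ℝ).restrict (Set.Ioc 0 (2 * π))) (fun p => ‖w p‖ₑ ^ 4)
      (Measurable.aemeasurable (by fun_prop))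
    rw [← h1, eLpNorm_eq_lintegral_rpow_enorm_toReal (by simp) (by simp),
      ← ENNReal.rpow_mul_natCast]
    simp [μT]
  have hmix : mixedL6L2 w ^ (3 : ℕ) = (∫⁻ x, a x ^ 3) ^ ((1 : ℝ) / 2) := by
    simp only [mixedL6L2]
    rw [← ENNReal.rpow_mul_natCast]
    norm_num
    rfl
  have hfib : ∀ᵐ x : R2, ∫⁻ y in Set.Ioc 0 (2 * π), ‖w (x, y)‖ₑ ^ 4 ≤
      ENNReal.ofReal C * (a x ^ ((3 : ℝ) / 2) * b x ^ ((1 : ℝ) / 2)) := by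
    filter_upwards [ae_lt_top' hbm hbfin] with x hx
    have hux : Differentiable ℝ fun y : ℝ => u (x, y) :=
      hd.comp (by fun_prop)
    set c : ℂ := (2 * π : ℝ)⁻¹ • ∫ y in (0 : ℝ)..(2 * π), u (x, y) with hc
    have hwx : ∀ y, w (x, y) = u (x, y) - c := fun y => rfl
    have hder : ∀ y, deriv (fun y => w (x, y)) y = dyDeriv u (x, y) := by
      intro y
      simp only [hwx, dyDeriv]
      exact deriv_sub_const ..
    have := fiber C hC hGN (fun y => w (x, y)) (by simp only [hwx]; fun_prop)
      (fun y => by simp only [hwx, hper]) ?_ ?_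
    · simp only [hder] at this
      rw [← mul_assoc]
      exact this
    · simp only [hwx]
      rw [intervalIntegral.integral_sub (hux.continuous.intervalIntegrable _ _) (by simp),
        intervalIntegral.integral_const, hc, sub_zero, smul_inv_smul₀ hT.ne', sub_self]
    · simp only [hder]
      exact hx.ne
  rw [hL4, hmix, hdn, mul_assoc]
  calc _ ≤ ∫⁻ x, ENNReal.ofReal C * (a x ^ ((3 : ℝ) / 2) * b x ^ ((1 : ℝ) / 2)) :=
        lintegral_mono_ae hfib
    _ = ENNReal.ofReal C * ∫⁻ x, a x ^ ((3 : ℝ) / 2) * b x ^ ((1 : ℝ) / 2) :=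
        lintegral_const_mul' _ _ ENNReal.ofReal_ne_top
    _ ≤ _ := by
        gcongr
        have h := ENNReal.lintegral_mul_le_Lp_mul_Lq (volume : Measure R2)
          Real.HolderConjugate.two_two
          (ham.aemeasurable.pow_const ((3 : ℝ) / 2)) (hbm.pow_const ((1 : ℝ) / 2))
        simp only [Pi.mul_apply, ← ENNReal.rpow_mul] at h
        norm_num at h
        norm_num
        exact h

end
end

section
/- Let C_{GN,2d} := inf{ ‖u‖_{L²(ℝ²)}² ‖∇u‖_{L²(ℝ²)}² / ‖u‖_{L⁴(ℝ²)}⁴ : u ∈ H¹(ℝ²), u ≠ 0 }. There exists u ∈ H¹(ℝ²×𝕋) such that ‖u‖_{L⁴(ℝ²×𝕋)} > (2π C_{GN,2d})^{-1/4} · ‖∇ₓu‖_{L²(ℝ²×𝕋)}^{1/2} · ‖u‖_{L²(ℝ²×𝕋)}^{1/2}; that is, the inequality of Proposition 1.4 fails if the constant c multiplying the ∂ᵧ term is taken to be 0. -/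
open MeasureTheory Real
open scoped ENNReal

noncomputable section

lemma aux_CS {α : Type*} [MeasurableSpace α] (μ : Measure α) {f g : α → ℝ≥0∞}
    (hf : AEMeasurable f μ) (hg : AEMeasurable g μ) :
    (∫⁻ a, f a * g a ∂μ) ^ 2 ≤ (∫⁻ a, f a ^ 2 ∂μ) * (∫⁻ a, g a ^ 2 ∂μ) := by
  have h := ENNReal.lintegral_mul_le_Lp_mul_Lq μ Real.HolderConjugate.two_two hf hg
  have h2 := pow_le_pow_left' h 2
  simp only [Pi.mul_apply] at h2
  refine h2.trans (le_of_eq ?_)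
  rw [mul_pow, ← ENNReal.rpow_natCast, ← ENNReal.rpow_natCast, ← ENNReal.rpow_mul,
    ← ENNReal.rpow_mul]
  norm_num

lemma aux_1d (g : ℝ → ℂ) (hg : Differentiable ℝ g) (W : ℝ → ℝ≥0∞)
    (hW : ∀ t, ‖deriv g t‖ₑ ≤ W t) (h2 : ∫⁻ t, ‖g t‖ₑ ^ 2 ≠ ⊤) (a : ℝ) :
    ‖g a‖ₑ ^ 2 ≤ 2 * ∫⁻ t, ‖g t‖ₑ * W t := by
  by_cases hfin : ∫⁻ t, ‖g t‖ₑ * W t = ⊤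
  · rw [hfin]; simp
  have hgm : Measurable g := hg.continuous.measurable
  have hb : ∀ t, ‖2 * (g t * deriv g t)‖ₑ ≤ 2 * (‖g t‖ₑ * W t) := by
    intro t
    rw [enorm_mul, enorm_mul]
    have : ‖(2 : ℂ)‖ₑ = 2 := by
      rw [← ofReal_norm]; simp
    rw [this]
    gcongr
    exact hW t
  have hle : ∫⁻ t, ‖2 * (g t * deriv g t)‖ₑ ≤ 2 * ∫⁻ t, ‖g t‖ₑ * W t := by
    rw [← lintegral_const_mul' _ _ (by simp)]
    exact lintegral_mono hb
  have hder : ∀ t, HasDerivAt (fun t => g t ^ 2) (2 * (g t * deriv g t)) t := by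
    intro t
    convert! (hg t).hasDerivAt.pow 2 using 1
    simp; ring
  have hi' : Integrable (fun t => 2 * (g t * deriv g t)) := by
    refine ⟨((hgm.mul (measurable_deriv g)).const_mul 2).aestronglyMeasurable, ?_⟩
    exact lt_of_le_of_lt hle (ENNReal.mul_lt_top (by simp) (lt_top_iff_ne_top.2 hfin))
  have hi : Integrable (fun t => g t ^ 2) := by
    refine ⟨(hgm.pow_const 2).aestronglyMeasurable, ?_⟩
    simp only [HasFiniteIntegral, enorm_pow]
    exact lt_top_iff_ne_top.2 h2
  have ht := tendsto_zero_of_hasDerivAt_of_integrableOn_Iic (a := a) (fun t _ => hder t)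
    hi'.integrableOn hi.integrableOn
  have he := integral_Iic_of_hasDerivAt_of_tendsto' (a := a) (fun t _ => hder t)
    hi'.integrableOn ht
  rw [sub_zero] at he
  calc ‖g a‖ₑ ^ 2 = ‖g a ^ 2‖ₑ := by rw [enorm_pow]
    _ ≤ ∫⁻ t in Set.Iic a, ‖2 * (g t * deriv g t)‖ₑ := by
        rw [← he]; exact enorm_integral_le_lintegral_enorm _
    _ ≤ ∫⁻ t, ‖2 * (g t * deriv g t)‖ₑ := setLIntegral_le_lintegral _ _
    _ ≤ _ := hle

/-- GN on the plane, abstractly -/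
lemma aux_2d (v w : ℝ × ℝ → ℝ≥0∞) (hv : Measurable v) (hw : Measurable w)
    (h1 : ∀ b, ∫⁻ t, v (t, b) ^ 2 ≠ ⊤ → ∀ a, v (a, b) ^ 2 ≤ 2 * ∫⁻ t, v (t, b) * w (t, b))
    (h2 : ∀ a, ∫⁻ t, v (a, t) ^ 2 ≠ ⊤ → ∀ b, v (a, b) ^ 2 ≤ 2 * ∫⁻ t, v (a, t) * w (a, t))
    (hfin : ∫⁻ p, v p ^ 2 ≠ ⊤) :
    ∫⁻ p, v p ^ 4 ≤ 4 * ((∫⁻ p, v p ^ 2) * ∫⁻ p, w p ^ 2) := by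
  have hv2 : Measurable (fun p => v p ^ 2) := hv.pow_const 2
  have hvw : Measurable (fun p => v p * w p) := hv.mul hw
  have e1 : ∀ᵐ b : ℝ, ∫⁻ t, v (t, b) ^ 2 ≠ ⊤ := by
    have h := lintegral_prod_symm (μ := (volume : Measure ℝ)) (ν := (volume : Measure ℝ))
      _ hv2.aemeasurable
    rw [← Measure.volume_eq_prod] at h
    rw [h] at hfin
    filter_upwards [ae_lt_top (by fun_prop) hfin] with b hb using hb.ne
  have e2 : ∀ᵐ a : ℝ, ∫⁻ t, v (a, t) ^ 2 ≠ ⊤ := by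
    have h := lintegral_prod (μ := (volume : Measure ℝ)) (ν := (volume : Measure ℝ))
      _ hv2.aemeasurable
    rw [← Measure.volume_eq_prod] at h
    rw [h] at hfin
    filter_upwards [ae_lt_top (by fun_prop) hfin] with b hb using hb.ne
  set F : ℝ → ℝ≥0∞ := fun b => ∫⁻ t, v (t, b) * w (t, b) with hF
  set G : ℝ → ℝ≥0∞ := fun a => ∫⁻ t, v (a, t) * w (a, t) with hG
  have hFm : Measurable F := by fun_prop
  have hGm : Measurable G := by fun_prop
  have iF : ∫⁻ b, F b = ∫⁻ p, v p * w p := by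
    have h := lintegral_prod_symm (μ := (volume : Measure ℝ)) (ν := (volume : Measure ℝ))
      _ hvw.aemeasurable
    rw [Measure.volume_eq_prod, h]
  have iG : ∫⁻ a, G a = ∫⁻ p, v p * w p := by
    have h := lintegral_prod (μ := (volume : Measure ℝ)) (ν := (volume : Measure ℝ))
      _ hvw.aemeasurable
    rw [Measure.volume_eq_prod, h]
  calc ∫⁻ p, v p ^ 4 = ∫⁻ a, ∫⁻ b, v (a, b) ^ 4 := by
        rw [Measure.volume_eq_prod, lintegral_prod _ (by fun_prop)]
    _ ≤ ∫⁻ a, ∫⁻ b, (2 * G a) * (2 * F b) := by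
        refine lintegral_mono_ae ?_
        filter_upwards [e2] with a ha
        refine lintegral_mono_ae ?_
        filter_upwards [e1] with b hb
        calc v (a, b) ^ 4 = v (a, b) ^ 2 * v (a, b) ^ 2 := by ring
          _ ≤ _ := mul_le_mul' (h2 a ha b) (h1 b hb a)
    _ = 4 * (∫⁻ p, v p * w p) ^ 2 := by
        simp_rw [lintegral_const_mul _ (hFm.const_mul 2), lintegral_const_mul _ hFm, iF]
        rw [lintegral_mul_const _ (hGm.const_mul 2), lintegral_const_mul _ hGm, iG]
        ring
    _ ≤ _ := by
        gcongr
        exact aux_CS _ hv.aemeasurable hw.aemeasurable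

lemma aux_norm2 {α E : Type*} [MeasurableSpace α] [NormedAddCommGroup E] (μ : Measure α)
    (f : α → E) : eLpNorm f 2 μ ^ 2 = ∫⁻ x, ‖f x‖ₑ ^ 2 ∂μ := by
  have h := eLpNorm_nnreal_pow_eq_lintegral (μ := μ) (f := f) (p := 2) (by norm_num)
  have e : (((2 : NNReal) : ℝ)) = ((2 : ℕ) : ℝ) := by norm_num
  rw [e] at h
  simp only [ENNReal.rpow_natCast] at h
  exact h

lemma aux_norm4 {α E : Type*} [MeasurableSpace α] [NormedAddCommGroup E] (μ : Measure α)
    (f : α → E) : eLpNorm f 4 μ ^ 4 = ∫⁻ x, ‖f x‖ₑ ^ 4 ∂μ := by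
  have h := eLpNorm_nnreal_pow_eq_lintegral (μ := μ) (f := f) (p := 4) (by norm_num)
  have e : (((4 : NNReal) : ℝ)) = ((4 : ℕ) : ℝ) := by norm_num
  rw [e] at h
  simp only [ENNReal.rpow_natCast] at h
  exact h

lemma aux_mp : ∃ e : ℝ × ℝ → R2, MeasurePreserving e volume volume ∧ MeasurableEmbedding e ∧
    ∀ a b, e (a, b) = a • EuclideanSpace.single 0 1 + b • EuclideanSpace.single 1 1 := by
  refine ⟨fun p => (MeasurableEquiv.toLp 2 (Fin 2 → ℝ)) (MeasurableEquiv.finTwoArrow.symm p),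
    (PiLp.volume_preserving_toLp (Fin 2)).comp (volume_preserving_finTwoArrow ℝ).symm,
    (MeasurableEquiv.toLp 2 (Fin 2 → ℝ)).measurableEmbedding.comp
      MeasurableEquiv.finTwoArrow.symm.measurableEmbedding, ?_⟩
  intro a b
  ext i
  fin_cases i <;> simp

lemma aux_GN (u : R2 → ℂ) (hu : IsH1 u) :
    eLpNorm u 4 volume ^ 4 ≤
      4 * (eLpNorm u 2 volume ^ 2 * eLpNorm (gradNorm u) 2 volume ^ 2) := by
  obtain ⟨e, he, hem, hee⟩ := aux_mp
  obtain ⟨hd, hu2, hg2⟩ := hu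
  have hfin : eLpNorm u 2 volume ^ 2 ≠ ⊤ := ENNReal.pow_ne_top hu2.2.ne
  rw [aux_norm2, aux_norm2, aux_norm4]
  rw [aux_norm2] at hfin
  rw [← he.lintegral_comp_emb hem, ← he.lintegral_comp_emb hem, ← he.lintegral_comp_emb hem]
  rw [← he.lintegral_comp_emb hem] at hfin
  have hgm : Measurable (gradNorm u) := (measurable_fderiv ℝ u).norm
  have hE : ∀ i : Fin 2, ‖(EuclideanSpace.single i 1 : R2)‖ = 1 := by intro i; simp
  have key : ∀ (x z : R2), ‖z‖ = 1 → ∀ t, HasDerivAt (fun t : ℝ => u (t • z + x))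
      (fderiv ℝ u (t • z + x) z) t := by
    intro x z hz t
    have h1 : HasDerivAt (fun t : ℝ => t • z + x) z t := by
      simpa using ((hasDerivAt_id t).smul_const z).add_const x
    exact (hd _).hasFDerivAt.comp_hasDerivAt t h1
  have key2 : ∀ (x z : R2), ‖z‖ = 1 → ∀ t, ‖deriv (fun t : ℝ => u (t • z + x)) t‖ₑ ≤
      ‖gradNorm u (t • z + x)‖ₑ := by
    intro x z hz t
    rw [(key x z hz t).deriv]
    apply enorm_le_iff_norm_le.2
    have := (fderiv ℝ u (t • z + x)).le_opNorm z
    rw [hz, mul_one] at this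
    simpa [gradNorm] using this
  refine aux_2d (fun p => ‖u (e p)‖ₑ) (fun p => ‖gradNorm u (e p)‖ₑ)
    (hd.continuous.measurable.comp he.measurable).enorm (hgm.comp he.measurable).enorm ?_ ?_ hfin
  · intro b hb a
    simp only [hee] at hb ⊢
    exact aux_1d _ (fun t => (key _ _ (hE 0) t).differentiableAt) _ (key2 _ _ (hE 0)) hb a
  · intro a hb b
    simp only [hee, add_comm (a • _)] at hb ⊢
    exact aux_1d _ (fun t => (key _ _ (hE 1) t).differentiableAt) _ (key2 _ _ (hE 1)) hb b

lemma aux_N4_ne_zero (u : R2 → ℂ) (hu : IsH1 u) (h0 : ¬ u =ᵐ[volume] (0 : R2 → ℂ)) :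
    eLpNorm u 4 volume ^ 4 ≠ 0 := by
  refine pow_ne_zero _ fun h => h0 ?_
  exact (eLpNorm_eq_zero_iff hu.1.continuous.aestronglyMeasurable (by norm_num)).1 h

lemma aux_N4_ne_top (u : R2 → ℂ) (hu : IsH1 u) : eLpNorm u 4 volume ^ 4 ≠ ⊤ := by
  refine ne_top_of_le_ne_top ?_ (aux_GN u hu)
  exact ENNReal.mul_ne_top (by simp) (ENNReal.mul_ne_top (ENNReal.pow_ne_top hu.2.1.2.ne)
    (ENNReal.pow_ne_top hu.2.2.2.ne))

lemma aux_C_pos : CGN2d ≠ 0 := by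
  have : (4 : ℝ≥0∞)⁻¹ ≤ CGN2d := by
    refine le_iInf₂ fun u hu => ?_
    obtain ⟨hu, h0⟩ := hu
    rw [ENNReal.le_div_iff_mul_le (Or.inl (aux_N4_ne_zero u hu h0))
      (Or.inl (aux_N4_ne_top u hu))]
    rw [mul_comm, ← div_eq_mul_inv]
    refine ENNReal.div_le_of_le_mul' (aux_GN u hu)
  intro h
  rw [h] at this
  simp at this

lemma aux_bump : ∃ u : R2 → ℂ, IsH1 u ∧ ¬ u =ᵐ[volume] (0 : R2 → ℂ) := by
  let φ : ContDiffBump (0 : R2) := ⟨1, 2, by norm_num, by norm_num⟩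
  let u : R2 → ℂ := fun x => ((φ x : ℝ) : ℂ)
  have hcd : ContDiff ℝ 1 u := Complex.ofRealCLM.contDiff.comp φ.contDiff
  have hcs : HasCompactSupport u := φ.hasCompactSupport.comp_left (g := fun r : ℝ => (r : ℂ)) (by simp)
  refine ⟨u, ⟨hcd.differentiable (by norm_num), hcd.continuous.memLp_of_hasCompactSupport hcs,
    ?_⟩, ?_⟩
  · exact (hcd.continuous_fderiv (by norm_num)).norm.memLp_of_hasCompactSupport
      (hcs.fderiv (𝕜 := ℝ)).norm
  · intro h
    have := (hcd.continuous.ae_eq_iff_eq volume (continuous_const (y := (0 : ℂ)))).1 h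
    have h0 := congrFun this 0
    have h1 : φ 0 = 1 := φ.one_of_mem_closedBall (by simp [φ])
    simp [u, h1] at h0

lemma aux_C_top : CGN2d ≠ ⊤ := by
  obtain ⟨u, hu, h0⟩ := aux_bump
  have : CGN2d ≤ _ := iInf₂_le u ⟨hu, h0⟩
  refine ne_top_of_le_ne_top ?_ this
  exact ENNReal.div_ne_top (ENNReal.mul_ne_top (ENNReal.pow_ne_top hu.2.1.2.ne)
    (ENNReal.pow_ne_top hu.2.2.2.ne)) (aux_N4_ne_zero u hu h0)

lemma aux_Q : ∃ u : R2 → ℂ, IsH1 u ∧ ¬ u =ᵐ[volume] (0 : R2 → ℂ) ∧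
    eLpNorm u 2 volume ^ 2 * eLpNorm (gradNorm u) 2 volume ^ 2 / eLpNorm u 4 volume ^ 4 <
      ENNReal.ofReal (5 / 4) * CGN2d := by
  have h : CGN2d < ENNReal.ofReal (5 / 4) * CGN2d := by
    conv_lhs => rw [← one_mul CGN2d]
    apply ENNReal.mul_lt_mul_left aux_C_pos aux_C_top
    rw [← ENNReal.ofReal_one]
    exact (ENNReal.ofReal_lt_ofReal_iff (by norm_num)).2 (by norm_num)
  conv_lhs at h => unfold CGN2d
  obtain ⟨u, hu⟩ := iInf_lt_iff.1 h
  obtain ⟨hm, hu⟩ := iInf_lt_iff.1 hu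
  exact ⟨u, hm.1, hm.2, hu⟩

lemma aux_prod {E F G : Type*} [NormedAddCommGroup E] [NormedAddCommGroup F]
    [NormedAddCommGroup G] (n : ℕ) (h : R2 × ℝ → E) (a : R2 → F) (b : ℝ → G)
    (ha : AEStronglyMeasurable a volume) (hb : Continuous b)
    (hab : ∀ x y, ‖h (x, y)‖ = ‖a x‖ * ‖b y‖) :
    ∫⁻ p, ‖h p‖ₑ ^ n ∂μT =
      (∫⁻ x, ‖a x‖ₑ ^ n) * ENNReal.ofReal (∫ y in (0 : ℝ)..(2 * π), ‖b y‖ ^ n) := by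
  have e : ∀ p, ‖h p‖ₑ ^ n = ‖a p.1‖ₑ ^ n * ‖b p.2‖ₑ ^ n := by
    rintro ⟨x, y⟩
    rw [← mul_pow, ← ofReal_norm, hab, ENNReal.ofReal_mul (norm_nonneg _), ofReal_norm,
      ofReal_norm]
  simp_rw [e]
  unfold μT
  rw [lintegral_prod_mul (f := fun x => ‖a x‖ₑ ^ n) (g := fun y => ‖b y‖ₑ ^ n)
    (ha.enorm.pow_const n) (hb.enorm.measurable.pow_const n).aemeasurable]
  congr 1
  rw [intervalIntegral.integral_of_le (by positivity),
    ofReal_integral_eq_lintegral_ofReal]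
  · refine lintegral_congr fun y => ?_
    rw [ENNReal.ofReal_pow (norm_nonneg _), ofReal_norm]
  · exact ((hb.norm.pow n).integrableOn_Icc).mono_set Set.Ioc_subset_Icc_self
  · exact Filter.Eventually.of_forall fun y => by positivity

lemma aux_memLp {E : Type*} [NormedAddCommGroup E] (h : R2 × ℝ → E)
    (hm : AEStronglyMeasurable h μT) (hf : ∫⁻ p, ‖h p‖ₑ ^ 2 ∂μT ≠ ⊤) : MemLp h 2 μT := by
  refine ⟨hm, lt_top_iff_ne_top.2 fun ht => hf ?_⟩
  rw [← aux_norm2, ht]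
  simp

lemma aux_cos2 : ∫ y in (0 : ℝ)..(2 * π), ‖((Real.cos y : ℝ) : ℂ)‖ ^ 2 = π := by
  simp only [Complex.norm_real, Real.norm_eq_abs, sq_abs]
  rw [integral_cos_sq]
  simp

lemma aux_cos4 : ∫ y in (0 : ℝ)..(2 * π), ‖((Real.cos y : ℝ) : ℂ)‖ ^ 4 = 3 * π / 4 := by
  have : ∀ y : ℝ, ‖((Real.cos y : ℝ) : ℂ)‖ ^ 4 = Real.cos y ^ (2 + 2) := by
    intro y
    rw [Complex.norm_real, Real.norm_eq_abs]
    exact (even_two_mul 2).pow_abs _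
  simp only [this]
  rw [integral_cos_pow, integral_cos_sq]
  simp
  ring

/-- Second sharpness claim of Remark 1.5(ii): there exists `u ∈ H¹(ℝ²×𝕋)` with
`‖u‖_{L⁴} > (2π C_{GN,2d})^{-1/4} ‖∇ₓu‖_{L²}^{1/2} ‖u‖_{L²}^{1/2}`; i.e. Proposition 1.4
fails with `c = 0`. -/
theorem no_inequality_without_y_derivative :
    ∃ u : R2 × ℝ → ℂ, IsH1T u ∧
      (ENNReal.ofReal (2 * π) * CGN2d) ^ (-(1 : ℝ) / 4) *
          eLpNorm (gradxNorm u) 2 μT ^ ((1 : ℝ) / 2) * eLpNorm u 2 μT ^ ((1 : ℝ) / 2) <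
        eLpNorm u 4 μT := by
  obtain ⟨Q, hQ, hQ0, hQlt⟩ := aux_Q
  have hN0 := aux_N4_ne_zero Q hQ hQ0
  have hNt := aux_N4_ne_top Q hQ
  obtain ⟨hd, hQ2, hQg⟩ := hQ
  let f : ℝ → ℂ := fun y => ((Real.cos y : ℝ) : ℂ)
  have hfd : ∀ y, HasDerivAt f ((-Real.sin y : ℝ) : ℂ) y := fun y =>
    (Real.hasDerivAt_cos y).ofReal_comp
  have hfc : Continuous f := by fun_prop
  let u : R2 × ℝ → ℂ := fun p => Q p.1 * f p.2
  have hfD : Differentiable ℝ f := fun y => (hfd y).differentiableAt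
  have hud : Differentiable ℝ u := (hd.comp differentiable_fst).mul (hfD.comp differentiable_snd)
  have hgu : ∀ p, gradxNorm u p = gradNorm Q p.1 * ‖f p.2‖ := by
    intro p
    have : HasFDerivAt (fun x => u (x, p.2)) (f p.2 • fderiv ℝ Q p.1) p.1 :=
      (hd p.1).hasFDerivAt.mul_const (f p.2)
    rw [gradxNorm, this.fderiv, norm_smul, mul_comm]; rfl
  have hdy : ∀ p, dyDeriv u p = Q p.1 * ((-Real.sin p.2 : ℝ) : ℂ) := by
    intro p
    exact ((hfd p.2).const_mul (Q p.1)).deriv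
  have hgm : Measurable (gradNorm Q) := (measurable_fderiv ℝ Q).norm
  have i2 := aux_prod 2 u Q f hQ2.1 hfc (fun x y => norm_mul _ _)
  have i4 := aux_prod 4 u Q f hQ2.1 hfc (fun x y => norm_mul _ _)
  have ig := aux_prod 2 (gradxNorm u) (gradNorm Q) f hQg.1 hfc
    (fun x y => by rw [hgu, norm_mul, norm_norm])
  have id := aux_prod 2 (dyDeriv u) Q (fun y => ((-Real.sin y : ℝ) : ℂ)) hQ2.1 (by fun_prop)
    (fun x y => by rw [hdy, norm_mul])
  have hM : eLpNorm Q 2 volume ^ 2 ≠ ⊤ := ENNReal.pow_ne_top hQ2.2.ne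
  have hG : eLpNorm (gradNorm Q) 2 volume ^ 2 ≠ ⊤ := ENNReal.pow_ne_top hQg.2.ne
  rw [← aux_norm2 volume Q] at i2 id
  rw [← aux_norm2 volume] at ig
  rw [← aux_norm4 volume] at i4
  refine ⟨u, ⟨hud, ?_, ?_, ?_, ?_⟩, ?_⟩
  · intro x y
    simp only [u, f, Real.cos_add_two_pi]
  · refine aux_memLp _ hud.continuous.aestronglyMeasurable ?_
    rw [i2]; exact ENNReal.mul_ne_top hM ENNReal.ofReal_ne_top
  · refine aux_memLp _ ?_ ?_
    · rw [show gradxNorm u = fun p => gradNorm Q p.1 * ‖f p.2‖ from funext hgu]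
      exact ((hgm.comp measurable_fst).mul
        (hfc.norm.measurable.comp measurable_snd)).aestronglyMeasurable
    · rw [ig]; exact ENNReal.mul_ne_top hG ENNReal.ofReal_ne_top
  · refine aux_memLp _ ?_ ?_
    · rw [show dyDeriv u = fun p => Q p.1 * ((-Real.sin p.2 : ℝ) : ℂ) from funext hdy]
      have := hd.continuous
      exact Continuous.aestronglyMeasurable (by fun_prop)
    · rw [id]; exact ENNReal.mul_ne_top hM ENNReal.ofReal_ne_top
  · rw [← aux_norm2] at i2 ig
    rw [← aux_norm4] at i4
    rw [aux_cos2] at i2 ig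
    rw [aux_cos4] at i4
    refine lt_of_pow_lt_pow_left' 4 ?_
    have r1 : ∀ x : ℝ≥0∞, (x ^ ((1 : ℝ) / 2)) ^ 4 = x ^ 2 := by
      intro x
      rw [← ENNReal.rpow_natCast, ← ENNReal.rpow_mul, ← ENNReal.rpow_natCast]
      norm_num
    have r2 : ∀ x : ℝ≥0∞, (x ^ (-(1 : ℝ) / 4)) ^ 4 = x⁻¹ := by
      intro x
      rw [← ENNReal.rpow_natCast, ← ENNReal.rpow_mul, ← ENNReal.rpow_neg_one]
      norm_num
    rw [mul_pow, mul_pow, r1, r1, r2, i2, ig, i4]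
    have hC0 := aux_C_pos
    have hCt := aux_C_top
    rw [ENNReal.div_lt_iff (Or.inl hN0) (Or.inl hNt)] at hQlt
    generalize eLpNorm Q 2 volume ^ 2 = M at *
    generalize eLpNorm (gradNorm Q) 2 volume ^ 2 = G at *
    generalize eLpNorm Q 4 volume ^ 4 = N at *
    generalize CGN2d = C at *
    have hN' := ENNReal.toReal_pos hN0 hNt
    have hC' := ENNReal.toReal_pos hC0 hCt
    rw [← ENNReal.ofReal_toReal hM, ← ENNReal.ofReal_toReal hG, ← ENNReal.ofReal_toReal hNt,
      ← ENNReal.ofReal_toReal hCt] at hQlt ⊢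
    have hM' : 0 ≤ M.toReal := ENNReal.toReal_nonneg
    have hG' : 0 ≤ G.toReal := ENNReal.toReal_nonneg
    generalize M.toReal = m at *
    generalize G.toReal = g at *
    generalize N.toReal = n at *
    generalize C.toReal = c at *
    have hpi := Real.pi_pos
    rw [← ENNReal.ofReal_mul (by positivity), ← ENNReal.ofReal_mul (by positivity),
      ← ENNReal.ofReal_mul (by positivity), ENNReal.ofReal_lt_ofReal_iff (by positivity)] at hQlt
    rw [← ENNReal.ofReal_mul (by positivity), ← ENNReal.ofReal_inv_of_pos (by positivity),
      ← ENNReal.ofReal_mul (by positivity), ← ENNReal.ofReal_mul (by positivity),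
      ← ENNReal.ofReal_mul (by positivity), ← ENNReal.ofReal_mul (by positivity),
      ← ENNReal.ofReal_mul (by positivity),
      ENNReal.ofReal_lt_ofReal_iff (by positivity)]
    have e : (2 * π * c)⁻¹ * (g * π) * (m * π) = (m * g) * (π / (2 * c)) := by
      field_simp
    rw [e]
    calc (m * g) * (π / (2 * c)) < (5 / 4 * c * n) * (π / (2 * c)) := by gcongr
      _ = 5 / 8 * (n * π) := by field_simp; ring
      _ < _ := by nlinarith [mul_pos hN' hpi]

end
end
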